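/- arXiv:1809.10354 — 7 statements merged into one kernel-verified Lean document; each statement's English description precedes it below -/
import Mathlib

section
/- Let V be a real Hilbert space, B : V × V → ℝ a bounded symmetric bilinear form with c‖v‖² ≤ B(v,v) for all v ∈ V for some c > 0, F : V → ℝ a bounded linear functional, and V_h ⊆ V a closed subspace. Let u ∈ V satisfy B(u,v) = F(v) for all v ∈ V and let u_h ∈ V_h satisfy B(u_h, v_h) = F(v_h) for all v_h ∈ V_h. Then for every v_h ∈ V_h one has √c · ‖u − u_h‖ ≤ √(B(u − v_h, u − v_h)). -/
/-!
The Galerkin error `u - uh` is `B`-orthogonal to `Vh`, so by Pythagoras `uh` minimizes the energy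
`B (u - v) (u - v)` over `v ∈ Vh`. Coercivity bounds `c * ‖u - uh‖ ^ 2` by this minimal energy.
-/

section BilinearForm

variable {R M : Type*} [CommRing R] [AddCommGroup M] [Module R M] {B : M →ₗ[R] M →ₗ[R] R}

lemma isMinOn_apply_sub_self_of_orthogonal [LinearOrder R] [IsStrictOrderedRing R]
    (hB : B.IsPosSemidef) {W : Submodule R M} {x y : M} (hy : y ∈ W)
    (horth : ∀ w ∈ W, B (x - y) w = 0) :
    IsMinOn (fun w ↦ B (x - w) (x - w)) W y := by
  intro w hw
  have pythagoras : B (x - y + (y - w)) (x - y + (y - w)) =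
      B (x - y) (x - y) + B (y - w) (y - w) :=
    (LinearMap.BilinForm.toQuadraticMap_isOrtho hB.isSymm).2 (horth _ (W.sub_mem hy hw))
  calc
    B (x - y) (x - y) ≤ B (x - y) (x - y) + B (y - w) (y - w) :=
      le_add_of_nonneg_right (hB.nonneg _)
    _ = B (x - y + (y - w)) (x - y + (y - w)) := pythagoras.symm
    _ = B (x - w) (x - w) := by rw [sub_add_sub_cancel]

end BilinearForm

lemma sqrt_mul_le_sqrt_of_mul_sq_le {a b x : ℝ} (hx : 0 ≤ x) (h : a * x ^ 2 ≤ b) :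
    √a * x ≤ √b := by
  calc
    √a * x = √(a * x ^ 2) := by rw [Real.sqrt_mul' a (sq_nonneg x), Real.sqrt_sq hx]
    _ ≤ √b := Real.sqrt_le_sqrt h

section Coercive

variable {V : Type*} [SeminormedAddCommGroup V] [NormedSpace ℝ V] {B : V →ₗ[ℝ] V →ₗ[ℝ] ℝ} {c : ℝ}

lemma isNonneg_of_mul_norm_sq_le (hc : 0 ≤ c) (hcoercive : ∀ v, c * ‖v‖ ^ 2 ≤ B v v) :
    B.IsNonneg where
  nonneg v := (mul_nonneg hc (sq_nonneg ‖v‖)).trans (hcoercive v)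

theorem cea_lemma_general (hBsymm : B.IsSymm) (hc : 0 ≤ c)
    (hcoercive : ∀ v, c * ‖v‖ ^ 2 ≤ B v v) (F : V →ₗ[ℝ] ℝ) {Vh : Submodule ℝ V} {u uh : V}
    (hu : ∀ v ∈ Vh, B u v = F v) (huh_mem : uh ∈ Vh) (huh : ∀ v ∈ Vh, B uh v = F v) :
    ∀ vh ∈ Vh, √c * ‖u - uh‖ ≤ √(B (u - vh) (u - vh)) := by
  intro vh hvh
  have hB : B.IsPosSemidef := ⟨hBsymm, isNonneg_of_mul_norm_sq_le hc hcoercive⟩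
  have galerkin_orthogonality : ∀ v ∈ Vh, B (u - uh) v = 0 := fun v hv ↦ by
    rw [LinearMap.map_sub₂, hu v hv, huh v hv, sub_self]
  have energy_le : B (u - uh) (u - uh) ≤ B (u - vh) (u - vh) :=
    isMinOn_apply_sub_self_of_orthogonal hB huh_mem galerkin_orthogonality hvh
  exact sqrt_mul_le_sqrt_of_mul_sq_le (norm_nonneg _) ((hcoercive _).trans energy_le)

end Coercive

/-- **Céa's lemma.**
Let `V` be a real Hilbert space, `B` a bounded symmetric bilinear form with
`c‖v‖² ≤ B v v` for all `v` for some `c > 0`, `F` a bounded linear functional,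
`V_h ⊆ V` a closed subspace.  If `u` solves the variational problem over `V` and
`u_h ∈ V_h` solves the Galerkin problem over `V_h`, then for every `v_h ∈ V_h`,
`√c · ‖u − u_h‖ ≤ √(B (u − v_h) (u − v_h))`. -/
theorem cea_lemma
    {V : Type*} [NormedAddCommGroup V] [InnerProductSpace ℝ V] [CompleteSpace V]
    (B : V →ₗ[ℝ] V →ₗ[ℝ] ℝ)
    (M : ℝ) (hBbound : ∀ u v : V, |B u v| ≤ M * ‖u‖ * ‖v‖)
    (hBsymm : ∀ u v : V, B u v = B v u)
    (c : ℝ) (hc : 0 < c)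
    (hcoercive : ∀ v : V, c * ‖v‖ ^ 2 ≤ B v v)
    (F : V →L[ℝ] ℝ)
    (Vh : Submodule ℝ V) (hVh : IsClosed (Vh : Set V))
    (u : V) (hu : ∀ v : V, B u v = F v)
    (uh : V) (huh_mem : uh ∈ Vh) (huh : ∀ vh ∈ Vh, B uh vh = F vh) :
    ∀ vh ∈ Vh, Real.sqrt c * ‖u - uh‖ ≤ Real.sqrt (B (u - vh) (u - vh)) :=
  cea_lemma_general ⟨hBsymm⟩ hc.le hcoercive F (fun v _ ↦ hu v) huh_mem huh
end

section
/- Let V be a real Hilbert space, B : V × V → ℝ a bounded symmetric bilinear form with c‖v‖² ≤ B(v,v) for all v for some c > 0, and ⟨·,·⟩ : V × V → ℝ a bounded symmetric positive semidefinite bilinear form. Let V_h ⊆ V be a closed subspace, let u ∈ V and u_h ∈ V_h satisfy B(u,v) = F(v) for all v ∈ V and B(u_h,v_h) = F(v_h) for all v_h ∈ V_h, for a bounded linear functional F. Let z ∈ V satisfy the dual problem B(v, z) = ⟨u − u_h, v⟩ for all v ∈ V. Then for every z_h ∈ V_h one has ⟨u − u_h, u − u_h⟩ ≤ √(B(u −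 u_h, u − u_h)) · √(B(z − z_h, z − z_h)). -/
/-!
Testing the dual problem with the Galerkin error `u - uh` rewrites the output `J (u - uh)` as
`B (u - uh) z`. The error is `B`-orthogonal to the discrete space, so `z` may be replaced by
`z - zh`, and the Cauchy–Schwarz inequality for `B` splits the product.
-/

section Galerkin

variable {R M N P : Type*} [CommSemiring R] [AddCommGroup M] [AddCommGroup N] [AddCommGroup P]
  [Module R M] [Module R N] [Module R P] {B : M →ₗ[R] N →ₗ[R] P} {u uh : M} {Vh : Set N}

theorem galerkin_orthogonality {F : N → P} (hu : ∀ v ∈ Vh, B u v = F v)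
    (huh : ∀ v ∈ Vh, B uh v = F v) {v : N} (hv : v ∈ Vh) : B (u - uh) v = 0 := by
  rw [map_sub, LinearMap.sub_apply, hu v hv, huh v hv, sub_self]

theorem galerkin_dual_error_representation {F : N → P} {J : M → P} {z zh : N}
    (hu : ∀ v ∈ Vh, B u v = F v) (huh : ∀ v ∈ Vh, B uh v = F v)
    (hz : ∀ v, B v z = J v) (hzh : zh ∈ Vh) : J (u - uh) = B (u - uh) (z - zh) := by
  rw [map_sub (B (u - uh)), galerkin_orthogonality hu huh hzh, sub_zero, hz]

end Galerkin

section PosSemidef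

variable {V : Type*} [AddCommGroup V] [Module ℝ V] {B : LinearMap.BilinForm ℝ V}

theorem abs_apply_le_sqrt_mul_sqrt_of_isPosSemidef (hB : B.IsPosSemidef) (x y : V) :
    |B x y| ≤ √(B x x) * √(B y y) := by
  rw [← Real.sqrt_mul (hB.nonneg x)]
  exact Real.abs_le_sqrt (B.apply_sq_le_of_symm hB.nonneg ⟨hB.eq⟩ x y)

theorem aubin_nitsche_duality_general (hB : B.IsPosSemidef) {F J : V → ℝ} {Vh : Set V}
    {u uh z zh : V} (hu : ∀ v, B u v = F v) (huh : ∀ v ∈ Vh, B uh v = F v)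
    (hz : ∀ v, B v z = J v) (hzh : zh ∈ Vh) :
    |J (u - uh)| ≤ √(B (u - uh) (u - uh)) * √(B (z - zh) (z - zh)) := by
  rw [galerkin_dual_error_representation (fun v _ ↦ hu v) huh hz hzh]
  exact abs_apply_le_sqrt_mul_sqrt_of_isPosSemidef hB _ _

end PosSemidef

/-- **Aubin–Nitsche duality estimate.**
Let `V` be a real Hilbert space, `B` a bounded symmetric coercive bilinear form
(constant `c > 0`), `I` a bounded symmetric positive semidefinite bilinear form
(playing the role of the `L²` inner product), `V_h` a closed subspace,
`u` the solution of the variational problem, `u_h` the Galerkin solution, and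
`z` the solution of the dual problem `B v z = I (u − u_h) v` for all `v`.
Then for every `z_h ∈ V_h`,
`I (u − u_h) (u − u_h) ≤ √(B (u − u_h) (u − u_h)) · √(B (z − z_h) (z − z_h))`. -/
theorem aubin_nitsche_duality
    {V : Type*} [NormedAddCommGroup V] [InnerProductSpace ℝ V] [CompleteSpace V]
    (B : V →ₗ[ℝ] V →ₗ[ℝ] ℝ)
    (M : ℝ) (hBbound : ∀ u v : V, |B u v| ≤ M * ‖u‖ * ‖v‖)
    (hBsymm : ∀ u v : V, B u v = B v u)
    (c : ℝ) (hc : 0 < c)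
    (hcoercive : ∀ v : V, c * ‖v‖ ^ 2 ≤ B v v)
    (I : V →ₗ[ℝ] V →ₗ[ℝ] ℝ)
    (MI : ℝ) (hIbound : ∀ u v : V, |I u v| ≤ MI * ‖u‖ * ‖v‖)
    (hIsymm : ∀ u v : V, I u v = I v u)
    (hIpsd : ∀ v : V, 0 ≤ I v v)
    (F : V →L[ℝ] ℝ)
    (Vh : Submodule ℝ V) (hVh : IsClosed (Vh : Set V))
    (u : V) (hu : ∀ v : V, B u v = F v)
    (uh : V) (huh_mem : uh ∈ Vh) (huh : ∀ vh ∈ Vh, B uh vh = F vh)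
    (z : V) (hz : ∀ v : V, B v z = I (u - uh) v) :
    ∀ zh ∈ Vh,
      I (u - uh) (u - uh) ≤
        Real.sqrt (B (u - uh) (u - uh)) * Real.sqrt (B (z - zh) (z - zh)) := by
  intro zh hzh
  have hB : LinearMap.BilinForm.IsPosSemidef B :=
    ⟨⟨hBsymm⟩, ⟨fun v ↦ le_trans (by positivity) (hcoercive v)⟩⟩
  exact (le_abs_self _).trans (aubin_nitsche_duality_general hB hu huh hz hzh)
end

section
/- Let V be a real Hilbert space, B : V × V → ℝ a bounded symmetric bilinear form with c‖v‖² ≤ B(v,v) for all v for some c > 0, and V_h ⊆ V a closed subspace. Let B_h : V_h × V_h → ℝ be a bounded bilinear form with c_h‖v_h‖² ≤ B_h(v_h,v_h) for all v_h ∈ V_h for some c_h > 0, and let F : V → ℝ and F_h : V_h → ℝ be bounded linear functionals. Let u_h ∈ V_h satisfy B(u_h, v_h) = F(v_h) for all v_h ∈ V_h, and let ū_h ∈ V_h satisfy B_h(ū_h, v_h) = F_h(v_h) for all v_h ∈ V_h. Then √(B(u_h − ū_h, u_h − ū_h)) ≤ sup over nonzero w_h ∈ V_h of ( F(w_h) −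 F_h(w_h) + B_h(ū_h, w_h) − B(ū_h, w_h) ) / √(B(w_h, w_h)). -/
/-!
Subtracting the two Galerkin equations, the numerator of every quotient equals `B e w`, where
`e = u_h − ū_h` lies in `V_h`. By the Cauchy–Schwarz inequality for `B` such a quotient is at most
`√(B e e)`, and `w = e` attains this bound, so the supremum is the energy norm of `e`.
-/

section EnergySeminorm

variable {E : Type*} [AddCommGroup E] [Module ℝ E] {B : E →ₗ[ℝ] E →ₗ[ℝ] ℝ}

theorem apply_le_sqrt_mul_sqrt_of_isPosSemidef (hB : B.IsPosSemidef) (x y : E) :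
    B x y ≤ √(B x x) * √(B y y) :=
  calc
    B x y ≤ √(B x x * B y y) :=
      Real.le_sqrt_of_sq_le (LinearMap.BilinForm.apply_sq_le_of_symm B hB.nonneg hB.isSymm x y)
    _ = √(B x x) * √(B y y) := Real.sqrt_mul (hB.nonneg x) _

-- A vector `w ≠ 0` with `B w w = 0` contributes `0 / 0 = 0`, which never exceeds the supremum of
-- the remaining quotients; for trivial `E` both sides are `0` because `sSup ∅ = 0`.
theorem sSup_apply_div_sqrt_of_isPosSemidef (hB : B.IsPosSemidef) (x : E) :
    sSup {t : ℝ | ∃ w : E, w ≠ 0 ∧ t = B x w / √(B w w)} = √(B x x) := by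
  have quotient_le (w : E) : B x w / √(B w w) ≤ √(B x x) :=
    div_le_of_le_mul₀ (Real.sqrt_nonneg _) (Real.sqrt_nonneg _)
      (apply_le_sqrt_mul_sqrt_of_isPosSemidef hB x w)
  apply le_antisymm
  · apply Real.sSup_le _ (Real.sqrt_nonneg _)
    rintro _ ⟨w, -, rfl⟩
    exact quotient_le w
  · obtain rfl | hx := eq_or_ne x 0
    · rw [map_zero, Real.sqrt_zero]
      apply Real.sSup_nonneg
      rintro _ ⟨w, -, rfl⟩
      rw [map_zero, LinearMap.zero_apply, zero_div]
    · apply le_csSup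
      · refine ⟨√(B x x), ?_⟩
        rintro _ ⟨w, -, rfl⟩
        exact quotient_le w
      · exact ⟨x, hx, Real.div_sqrt.symm⟩

theorem strang_comparison_conforming_nonconforming_general (hB : B.IsPosSemidef)
    (B' : E →ₗ[ℝ] E →ₗ[ℝ] ℝ) (F F' : E →ₗ[ℝ] ℝ)
    (u : E) (hu : ∀ v, B u v = F v) (u' : E) (hu' : ∀ v, B' u' v = F' v) :
    √(B (u - u') (u - u')) =
      sSup {t : ℝ | ∃ w : E, w ≠ 0 ∧ t = (F w - F' w + B' u' w - B u' w) / √(B w w)} := by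
  have consistency_error (w : E) : F w - F' w + B' u' w - B u' w = B (u - u') w := by
    rw [hu', ← hu, sub_add_cancel, LinearMap.map_sub₂]
  simp only [consistency_error, sSup_apply_div_sqrt_of_isPosSemidef hB]

end EnergySeminorm

/-- **Strang-type comparison of conforming and non-conforming Galerkin solutions.**
Let `V` be a real Hilbert space, `B` a bounded symmetric coercive bilinear form
(constant `c > 0`), `V_h ⊆ V` a closed subspace, `B_h` a bounded bilinear form on
`V_h` with discrete coercivity constant `c_h > 0`, and `F`, `F_h` bounded linear
functionals on `V` and `V_h` respectively.  If `u_h ∈ V_h` is the conforming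
Galerkin solution (`B u_h v_h = F v_h` for all `v_h ∈ V_h`) and `ū_h ∈ V_h` the
non-conforming one (`B_h ū_h v_h = F_h v_h` for all `v_h ∈ V_h`), then
`√(B (u_h − ū_h) (u_h − ū_h))` is bounded by the supremum, over nonzero
`w_h ∈ V_h`, of
`(F w_h − F_h w_h + B_h ū_h w_h − B ū_h w_h) / √(B w_h w_h)`. -/
theorem strang_comparison_conforming_nonconforming
    {V : Type*} [NormedAddCommGroup V] [InnerProductSpace ℝ V] [CompleteSpace V]
    (B : V →ₗ[ℝ] V →ₗ[ℝ] ℝ)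
    (M : ℝ) (hBbound : ∀ u v : V, |B u v| ≤ M * ‖u‖ * ‖v‖)
    (hBsymm : ∀ u v : V, B u v = B v u)
    (c : ℝ) (hc : 0 < c)
    (hcoercive : ∀ v : V, c * ‖v‖ ^ 2 ≤ B v v)
    (Vh : Submodule ℝ V) (hVh : IsClosed (Vh : Set V))
    (Bh : Vh →ₗ[ℝ] Vh →ₗ[ℝ] ℝ)
    (Mh : ℝ) (hBhbound : ∀ uh vh : Vh, |Bh uh vh| ≤ Mh * ‖uh‖ * ‖vh‖)
    (ch : ℝ) (hch : 0 < ch)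
    (hBhcoercive : ∀ vh : Vh, ch * ‖vh‖ ^ 2 ≤ Bh vh vh)
    (F : V →L[ℝ] ℝ) (Fh : Vh →L[ℝ] ℝ)
    (uh : Vh) (huh : ∀ vh : Vh, B (uh : V) (vh : V) = F (vh : V))
    (uuh : Vh) (huuh : ∀ vh : Vh, Bh uuh vh = Fh vh) :
    Real.sqrt (B ((uh : V) - (uuh : V)) ((uh : V) - (uuh : V))) ≤
      sSup {t : ℝ | ∃ wh : Vh, wh ≠ 0 ∧
        t = (F (wh : V) - Fh wh + Bh uuh wh - B (uuh : V) (wh : V)) /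
              Real.sqrt (B (wh : V) (wh : V))} := by
  have hBVh : (B.domRestrict₁₂ Vh Vh).IsPosSemidef :=
    { eq := fun x y ↦ hBsymm x y
      nonneg := fun v ↦ le_trans (by positivity) (hcoercive v) }
  exact (strang_comparison_conforming_nonconforming_general hBVh Bh (F.toLinearMap.domRestrict Vh)
    Fh.toLinearMap uh huh uuh huuh).le
end

section
/- Let Ω̂, Ω̆ ⊆ ℝⁿ be bounded open sets and Φ : Ω̂ → Ω̆ a bijective continuously differentiable map whose inverse is continuously differentiable, such that Φ and Φ⁻¹ are Lipschitz. Let f : Ω̆ → ℝ and g : Ω̆ → ℝⁿ be continuous and bounded. Then for every continuously differentiable v : ℝⁿ → ℝ with bounded derivative, ∫_{Ω̆} ( f(x̆) v(x̆) + g(x̆) · ∇v(x̆) ) dx̆ = ∫_{Ω̂} ( |det DΦ(x̂)| f(Φ(x̂)) (v∘Φ)(x̂) + |det DΦ(x̂)| ( DΦ(x̂)⁻¹ g(Φ(x̂)) ) · ∇(v∘Φ)(x̂) ) dx̂. -/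
/-!
By the change of variables formula for integrals, it is enough to compare the integrands at `Φ x`
and at `x`. The vector term is handled by the chain rule `Dv(Φ x) ∘ DΦ(x) = D(v ∘ Φ)(x)`: applied to
`DΦ(x)⁻¹ (g (Φ x))` it cancels the inverse where `DΦ(x)` is invertible, and elsewhere the factor
`|det DΦ(x)|` vanishes on both sides.
-/

open MeasureTheory Matrix

/-- The Jacobian matrix of a map `Φ : ℝⁿ → ℝⁿ` at a point. -/
noncomputable def jacobianMatrix {n : ℕ} (Φ : (Fin n → ℝ) → (Fin n → ℝ))
    (x : Fin n → ℝ) : Matrix (Fin n) (Fin n) ℝ :=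
  LinearMap.toMatrix' (fderiv ℝ Φ x : (Fin n → ℝ) →ₗ[ℝ] (Fin n → ℝ))

/-- The gradient of a scalar function on `ℝⁿ`, as a coordinate vector. -/
noncomputable def gradVec {n : ℕ} (u : (Fin n → ℝ) → ℝ) (x : Fin n → ℝ) :
    Fin n → ℝ :=
  fun i => fderiv ℝ u x (Pi.single i 1)

section

variable {n : ℕ}

/-- The right-hand side functional `v ↦ ∫_Ω (f v + g · ∇v)` with scalar datum `f` and vector
datum `g`, as it appears in the weak form of a second-order boundary value problem. -/
noncomputable def rhsFunctional (μ : Measure (Fin n → ℝ)) (Ω : Set (Fin n → ℝ))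
    (f : (Fin n → ℝ) → ℝ) (g : (Fin n → ℝ) → Fin n → ℝ) (v : (Fin n → ℝ) → ℝ) : ℝ :=
  ∫ x in Ω, (f x * v x + g x ⬝ᵥ gradVec v x) ∂μ

/-- The Piola transform `|det DΦ| DΦ⁻¹ (g ∘ Φ)`, pulling a vector field `g` back along `Φ`. It is
zero at points where `DΦ` is singular. -/
noncomputable def piolaTransform (Φ g : (Fin n → ℝ) → Fin n → ℝ) (x : Fin n → ℝ) : Fin n → ℝ :=
  |(jacobianMatrix Φ x).det| • ((jacobianMatrix Φ x)⁻¹ *ᵥ g (Φ x))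

lemma dotProduct_gradVec (w : Fin n → ℝ) (u : (Fin n → ℝ) → ℝ) (x : Fin n → ℝ) :
    w ⬝ᵥ gradVec u x = fderiv ℝ u x w := by
  calc w ⬝ᵥ gradVec u x = fderiv ℝ u x (∑ i, w i • Pi.single i 1) := by
        simp only [dotProduct, gradVec, map_sum, map_smul, smul_eq_mul]
    _ = fderiv ℝ u x w := by rw [← pi_eq_sum_univ' w]

lemma jacobianMatrix_mulVec (Φ : (Fin n → ℝ) → Fin n → ℝ) (x w : Fin n → ℝ) :
    jacobianMatrix Φ x *ᵥ w = fderiv ℝ Φ x w :=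
  LinearMap.toMatrix'_mulVec _ w

lemma det_jacobianMatrix (Φ : (Fin n → ℝ) → Fin n → ℝ) (x : Fin n → ℝ) :
    (jacobianMatrix Φ x).det = (fderiv ℝ Φ x).det :=
  LinearMap.det_toMatrix' _

lemma dotProduct_gradVec_comp {Φ : (Fin n → ℝ) → Fin n → ℝ} {v : (Fin n → ℝ) → ℝ}
    {x : Fin n → ℝ} (hv : DifferentiableAt ℝ v (Φ x)) (hΦ : DifferentiableAt ℝ Φ x)
    (w : Fin n → ℝ) :
    w ⬝ᵥ gradVec (v ∘ Φ) x = (jacobianMatrix Φ x *ᵥ w) ⬝ᵥ gradVec v (Φ x) := by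
  rw [dotProduct_gradVec, dotProduct_gradVec, jacobianMatrix_mulVec, fderiv_comp x hv hΦ,
    ContinuousLinearMap.comp_apply]

lemma jacobianMatrix_mulVec_piolaTransform (Φ g : (Fin n → ℝ) → Fin n → ℝ) (x : Fin n → ℝ) :
    jacobianMatrix Φ x *ᵥ piolaTransform Φ g x = |(jacobianMatrix Φ x).det| • g (Φ x) := by
  rw [piolaTransform, mulVec_smul, mulVec_mulVec]
  obtain hdet | hdet := eq_or_ne (jacobianMatrix Φ x).det 0
  · rw [hdet, abs_zero, zero_smul, zero_smul]
  · rw [mul_nonsing_inv _ hdet.isUnit, one_mulVec]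

lemma piolaTransform_dotProduct_gradVec_comp {Φ : (Fin n → ℝ) → Fin n → ℝ}
    {v : (Fin n → ℝ) → ℝ} {x : Fin n → ℝ} (hv : DifferentiableAt ℝ v (Φ x))
    (hΦ : DifferentiableAt ℝ Φ x) (g : (Fin n → ℝ) → Fin n → ℝ) :
    piolaTransform Φ g x ⬝ᵥ gradVec (v ∘ Φ) x =
      |(jacobianMatrix Φ x).det| * (g (Φ x) ⬝ᵥ gradVec v (Φ x)) := by
  rw [dotProduct_gradVec_comp hv hΦ, jacobianMatrix_mulVec_piolaTransform, smul_dotProduct,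
    smul_eq_mul]

lemma setIntegral_eq_setIntegral_abs_det_jacobianMatrix_mul (μ : Measure (Fin n → ℝ))
    [μ.IsAddHaarMeasure] {Ωhat Ωphys : Set (Fin n → ℝ)} (hΩhat : MeasurableSet Ωhat)
    {Φ : (Fin n → ℝ) → Fin n → ℝ} (hΦ : Set.BijOn Φ Ωhat Ωphys)
    (hΦd : ∀ x ∈ Ωhat, DifferentiableAt ℝ Φ x) (F : (Fin n → ℝ) → ℝ) :
    ∫ y in Ωphys, F y ∂μ = ∫ x in Ωhat, |(jacobianMatrix Φ x).det| * F (Φ x) ∂μ := by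
  simp only [det_jacobianMatrix, ← smul_eq_mul]
  rw [← hΦ.image_eq]
  exact integral_image_eq_integral_abs_det_fderiv_smul μ hΩhat
    (fun x hx => (hΦd x hx).hasFDerivAt.hasFDerivWithinAt) hΦ.injOn F

theorem parametric_right_hand_side_change_of_variables_general (μ : Measure (Fin n → ℝ))
    [μ.IsAddHaarMeasure] {Ωhat Ωphys : Set (Fin n → ℝ)} (hΩhat : MeasurableSet Ωhat)
    {Φ : (Fin n → ℝ) → Fin n → ℝ} (hΦ : Set.BijOn Φ Ωhat Ωphys)
    (hΦd : ∀ x ∈ Ωhat, DifferentiableAt ℝ Φ x)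
    (f : (Fin n → ℝ) → ℝ) (g : (Fin n → ℝ) → Fin n → ℝ)
    {v : (Fin n → ℝ) → ℝ} (hv : ∀ y ∈ Ωphys, DifferentiableAt ℝ v y) :
    rhsFunctional μ Ωphys f g v =
      rhsFunctional μ Ωhat (fun x => |(jacobianMatrix Φ x).det| * f (Φ x)) (piolaTransform Φ g)
        (v ∘ Φ) := by
  rw [rhsFunctional, setIntegral_eq_setIntegral_abs_det_jacobianMatrix_mul μ hΩhat hΦ hΦd]
  refine setIntegral_congr_fun hΩhat fun x hx => ?_
  simp only [piolaTransform_dotProduct_gradVec_comp (hv _ (hΦ.mapsTo hx)) (hΦd x hx),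
    Function.comp_apply, mul_add, mul_assoc]

end

/-- **Change of variables for the right-hand side functional.**
Let `Ω̂, Ω̆ ⊆ ℝⁿ` be bounded open sets and `Φ : Ω̂ → Ω̆` a bijective `C¹` map with
`C¹` inverse, such that `Φ` and `Φ⁻¹` are Lipschitz.  Let `f : Ω̆ → ℝ` and
`g : Ω̆ → ℝⁿ` be continuous and bounded.  Then for every `C¹` function
`v : ℝⁿ → ℝ` with bounded derivative,
`∫_{Ω̆} (f v + g · ∇v) = ∫_{Ω̂} (|det DΦ| (f∘Φ) (v∘Φ) + |det DΦ| (DΦ⁻¹ (g∘Φ)) · ∇(v∘Φ))`,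
i.e. the physical right-hand side transforms into a parametric right-hand side of
the same structure, with vector datum given by the Piola transform. -/
theorem parametric_right_hand_side_change_of_variables
    (n : ℕ) (hn : 1 ≤ n)
    (Ωhat Ωphys : Set (Fin n → ℝ))
    (hΩhat_open : IsOpen Ωhat) (hΩphys_open : IsOpen Ωphys)
    (hΩhat_bdd : Bornology.IsBounded Ωhat) (hΩphys_bdd : Bornology.IsBounded Ωphys)
    (Φ Ψ : (Fin n → ℝ) → (Fin n → ℝ))
    (hΦmaps : Set.MapsTo Φ Ωhat Ωphys) (hΨmaps : Set.MapsTo Ψ Ωphys Ωhat)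
    (hΨΦ : ∀ x ∈ Ωhat, Ψ (Φ x) = x) (hΦΨ : ∀ y ∈ Ωphys, Φ (Ψ y) = y)
    (hΦC1 : ContDiffOn ℝ 1 Φ Ωhat) (hΨC1 : ContDiffOn ℝ 1 Ψ Ωphys)
    (KΦ KΨ : NNReal)
    (hΦlip : LipschitzOnWith KΦ Φ Ωhat) (hΨlip : LipschitzOnWith KΨ Ψ Ωphys)
    (f : (Fin n → ℝ) → ℝ) (g : (Fin n → ℝ) → (Fin n → ℝ))
    (hf : ContinuousOn f Ωphys) (hg : ContinuousOn g Ωphys)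
    (Cf : ℝ) (hfb : ∀ x ∈ Ωphys, |f x| ≤ Cf)
    (Cg : ℝ) (hgb : ∀ x ∈ Ωphys, ‖g x‖ ≤ Cg)
    (v : (Fin n → ℝ) → ℝ) (hv : ContDiff ℝ 1 v)
    (Cv : ℝ) (hvb : ∀ x, ‖fderiv ℝ v x‖ ≤ Cv) :
    ∫ x in Ωphys, (f x * v x + g x ⬝ᵥ gradVec v x) =
      ∫ x in Ωhat,
        (|(jacobianMatrix Φ x).det| * f (Φ x) * (v ∘ Φ) x +
          |(jacobianMatrix Φ x).det| *
            (((jacobianMatrix Φ x)⁻¹.mulVec (g (Φ x))) ⬝ᵥ gradVec (v ∘ Φ) x)) := by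
  have hΦ : Set.BijOn Φ Ωhat Ωphys := Set.InvOn.bijOn ⟨hΨΦ, hΦΨ⟩ hΦmaps hΨmaps
  have hΦd : ∀ x ∈ Ωhat, DifferentiableAt ℝ Φ x := fun x hx =>
    (hΦC1.differentiableOn one_ne_zero).differentiableAt (hΩhat_open.mem_nhds hx)
  simpa only [rhsFunctional, piolaTransform, smul_dotProduct, smul_eq_mul] using
    parametric_right_hand_side_change_of_variables_general volume hΩhat_open.measurableSet hΦ hΦd
      f g fun y _ => hv.differentiable one_ne_zero y
end

section
/- Let Ω̂, Ω̆ ⊆ ℝⁿ be open sets and Φ : Ω̂ → Ω̆ a bijective twice continuously differentiable map with twice continuously differentiable inverse, satisfying det DΦ(x̂) > 0 for all x̂ ∈ Ω̂. Let g : Ω̆ → ℝⁿ be continuously differentiable, and define the Piola transform ĝ : Ω̂ → ℝⁿ by ĝ(x̂) = det DΦ(x̂) · DΦ(x̂)⁻¹ g(Φ(x̂)). Then for every x̂ ∈ Ω̂, div ĝ(x̂) = det DΦ(x̂) · (div g)(Φ(x̂)). -/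
/-!
Where `DΦ` is invertible, `det DΦ • (DΦ)⁻¹ = adj DΦ`, so the Piola transform is `adj DΦ · (g ∘ Φ)`
and its divergence splits by the product rule. In the term where `g ∘ Φ` is differentiated, the
chain rule and `DΦ · adj DΦ = det DΦ • 1` give `det DΦ · (div g) ∘ Φ`. The other term vanishes
because the columns of `adj DΦ` are divergence free: the `(i, j)` entry of `adj DΦ` is the
determinant of `DΦ` with `j`-th row `eᵢ`, and differentiating its `l`-th row along `eᵢ` and summing
over `i` gives `∑ i k, ∂ᵢ∂ₖΦₗ · det (…, eᵢ, …, eₖ, …)`, where `∂ᵢ∂ₖΦₗ` is symmetric and the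
determinant alternating in `(i, k)`.
-/

open Matrix

/-- The divergence of a vector field on `ℝⁿ`. -/
noncomputable def divergence {n : ℕ} (g : (Fin n → ℝ) → (Fin n → ℝ))
    (x : Fin n → ℝ) : ℝ :=
  ∑ i, fderiv ℝ g x (Pi.single i 1) i

section Determinant

variable {ι R : Type*} [Fintype ι] [CommRing R]

theorem sum_mul_eq_zero_of_isSymm_of_alternating {H F : Matrix ι ι R} (hH : H.IsSymm)
    (hF_diag : ∀ i, F i i = 0) (hF_swap : ∀ i k, F i k = -F k i) :
    ∑ i, ∑ k, H i k * F i k = 0 := by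
  rw [← Fintype.sum_prod_type']
  refine Finset.sum_involution (fun p _ => p.swap) (fun p _ => ?_) (fun p _ hp hswap => hp ?_)
    (fun p _ => Finset.mem_univ _) (fun p _ => p.swap_swap)
  · rw [Prod.fst_swap, Prod.snd_swap, hH.apply, hF_swap p.2 p.1, mul_neg, add_neg_cancel]
  · rw [show p.2 = p.1 from congrArg Prod.fst hswap, hF_diag, mul_zero]

variable [DecidableEq ι]

theorem det_updateRow_eq_sum (A : Matrix ι ι R) (l : ι) (r : ι → R) :
    (A.updateRow l r).det = ∑ k, r k * (A.updateRow l (Pi.single k 1)).det := by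
  rw [det_eq_sum_mul_adjugate_row _ l]
  simp only [updateRow_self, adjugate_apply, updateRow_idem]

theorem det_updateRow_updateRow_swap (A : Matrix ι ι R) {j l : ι} (hjl : j ≠ l) (u v : ι → R) :
    ((A.updateRow j u).updateRow l v).det = -((A.updateRow j v).updateRow l u).det := by
  have hperm : (A.updateRow j u).updateRow l v =
      ((A.updateRow j v).updateRow l u).submatrix (Equiv.swap j l) id := by
    ext a b
    rcases eq_or_ne a l with rfl | hal
    · simp [hjl]
    rcases eq_or_ne a j with rfl | haj
    · simp [hjl]
    · simp [hal, haj, Equiv.swap_apply_of_ne_of_ne]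
  rw [hperm, det_permute, Equiv.Perm.sign_swap hjl]
  simp

theorem sum_det_updateRow_single_updateRow_eq_zero (A : Matrix ι ι R) {j l : ι} (hjl : j ≠ l)
    {H : Matrix ι ι R} (hH : H.IsSymm) :
    ∑ i, ((A.updateRow j (Pi.single i 1)).updateRow l (H i)).det = 0 := by
  simp_rw [det_updateRow_eq_sum _ l (H _)]
  refine sum_mul_eq_zero_of_isSymm_of_alternating
    (F := of fun i k => ((A.updateRow j (Pi.single i 1)).updateRow l (Pi.single k 1)).det) hH
    (fun i => ?_) (fun i k => det_updateRow_updateRow_swap A hjl _ _)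
  exact det_zero_of_row_eq hjl (by simp [hjl])

end Determinant

section DeterminantDerivative

variable {𝕜 E ι : Type*} [NontriviallyNormedField 𝕜] [NormedAddCommGroup E] [NormedSpace 𝕜 E]
  [DecidableEq ι] {x : E}

theorem differentiableAt_updateRow_const {κ : Type*} {B : E → Matrix ι κ 𝕜}
    (hB : ∀ i, DifferentiableAt 𝕜 (fun y => B y i) x) (j : ι) (u : κ → 𝕜) (l : ι) :
    DifferentiableAt 𝕜 (fun y => (B y).updateRow j u l) x := by
  rcases eq_or_ne l j with rfl | hlj
  · simp
  · simpa [updateRow_ne hlj] using hB l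

variable [Fintype ι] {A : E → Matrix ι ι 𝕜}

variable (𝕜 ι) in
/-- The determinant as a continuous multilinear function of the rows, the form in which the
calculus of multilinear maps applies to it; rows carry the product topology. -/
def detRowContinuousMultilinear : ContinuousMultilinearMap 𝕜 (fun _ : ι => ι → 𝕜) 𝕜 where
  toMultilinearMap := (detRowAlternating (n := ι) (R := 𝕜)).toMultilinearMap
  cont := Continuous.matrix_det (A := fun M : Matrix ι ι 𝕜 => M) continuous_id

theorem hasFDerivAt_det {A' : ι → E →L[𝕜] ι → 𝕜}
    (hA : ∀ i, HasFDerivAt (fun y => A y i) (A' i) x) :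
    HasFDerivAt (fun y => (A y).det)
      (∑ i, (detRowContinuousMultilinear 𝕜 ι).toContinuousLinearMap (A x) i ∘L A' i) x :=
  HasFDerivAt.multilinear_comp (f := detRowContinuousMultilinear 𝕜 ι) hA

theorem differentiableAt_det (hA : ∀ i, DifferentiableAt 𝕜 (fun y => A y i) x) :
    DifferentiableAt 𝕜 (fun y => (A y).det) x :=
  (hasFDerivAt_det fun i => (hA i).hasFDerivAt).differentiableAt

theorem fderiv_det_apply (hA : ∀ i, DifferentiableAt 𝕜 (fun y => A y i) x) (v : E) :
    fderiv 𝕜 (fun y => (A y).det) x v =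
      ∑ i, ((A x).updateRow i (fderiv 𝕜 (fun y => A y i) x v)).det := by
  rw [(hasFDerivAt_det fun i => (hA i).hasFDerivAt).fderiv, _root_.sum_apply]
  rfl

theorem differentiableAt_adjugate_apply (hA : ∀ i, DifferentiableAt 𝕜 (fun y => A y i) x)
    (i j : ι) : DifferentiableAt 𝕜 (fun y => (A y).adjugate i j) x := by
  simp_rw [adjugate_apply]
  exact differentiableAt_det (differentiableAt_updateRow_const hA j _)

theorem fderiv_adjugate_apply (hA : ∀ i, DifferentiableAt 𝕜 (fun y => A y i) x)
    (i j : ι) (v : E) :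
    fderiv 𝕜 (fun y => (A y).adjugate i j) x v =
      ∑ l ∈ {j}ᶜ, (((A x).updateRow j (Pi.single i 1)).updateRow l
        (fderiv 𝕜 (fun y => A y l) x v)).det := by
  simp_rw [adjugate_apply]
  rw [fderiv_det_apply (differentiableAt_updateRow_const hA j _), Fintype.sum_eq_add_sum_compl j]
  have hj : (((A x).updateRow j (Pi.single i 1)).updateRow j
      (fderiv 𝕜 (fun y => (A y).updateRow j (Pi.single i 1) j) x v)).det = 0 :=
    det_eq_zero_of_row_eq_zero j (by simp)
  rw [hj, zero_add]
  refine Finset.sum_congr rfl fun l hl => ?_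
  have hlj : l ≠ j := by simpa using hl
  simp_rw [updateRow_ne hlj]

end DeterminantDerivative

section Divergence

variable {n : ℕ} {Φ g u : (Fin n → ℝ) → (Fin n → ℝ)} {x : Fin n → ℝ}

theorem jacobianMatrix_apply (Φ : (Fin n → ℝ) → (Fin n → ℝ)) (x : Fin n → ℝ) (i j : Fin n) :
    jacobianMatrix Φ x i j = fderiv ℝ Φ x (Pi.single j 1) i :=
  LinearMap.toMatrix'_apply _ i j

theorem jacobianMatrix_comp (hg : DifferentiableAt ℝ g (Φ x)) (hΦ : DifferentiableAt ℝ Φ x) :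
    jacobianMatrix (fun y => g (Φ y)) x = jacobianMatrix g (Φ x) * jacobianMatrix Φ x := by
  rw [jacobianMatrix, fderiv_fun_comp x hg hΦ]
  exact LinearMap.toMatrix'_comp _ _

theorem divergence_eq_trace_jacobianMatrix (g : (Fin n → ℝ) → (Fin n → ℝ)) (x : Fin n → ℝ) :
    divergence g x = (jacobianMatrix g x).trace := by
  simp [divergence, trace, jacobianMatrix_apply]

theorem divergence_eq_sum_fderiv_apply (hg : ∀ i, DifferentiableAt ℝ (fun y => g y i) x) :
    divergence g x = ∑ i, fderiv ℝ (fun y => g y i) x (Pi.single i 1) := by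
  rw [divergence, fderiv_pi hg]
  rfl

theorem divergence_mulVec {A : (Fin n → ℝ) → Matrix (Fin n) (Fin n) ℝ}
    (hA : ∀ i j, DifferentiableAt ℝ (fun y => A y i j) x) (hu : DifferentiableAt ℝ u x) :
    divergence (fun y => A y *ᵥ u y) x =
      ∑ j, divergence (fun y i => A y i j) x * u x j + (A x * jacobianMatrix u x).trace := by
  have hu' : ∀ j, DifferentiableAt ℝ (fun y => u y j) x := differentiableAt_pi.1 hu
  have hcol : ∀ j, divergence (fun y i => A y i j) x =
      ∑ i, fderiv ℝ (fun y => A y i j) x (Pi.single i 1) :=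
    fun j => divergence_eq_sum_fderiv_apply fun i => hA i j
  have hjac : ∀ j i, jacobianMatrix u x j i = fderiv ℝ (fun y => u y j) x (Pi.single i 1) := by
    intro j i
    rw [jacobianMatrix_apply, fderiv_apply hu]
    rfl
  have hprod : ∀ i, fderiv ℝ (fun y => (A y *ᵥ u y) i) x (Pi.single i 1) =
      ∑ j, (fderiv ℝ (fun y => A y i j) x (Pi.single i 1) * u x j +
        A x i j * jacobianMatrix u x j i) := by
    intro i
    simp only [mulVec, dotProduct, hjac]
    rw [fderiv_fun_sum fun j _ => (hA i j).fun_mul (hu' j), _root_.sum_apply]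
    refine Finset.sum_congr rfl fun j _ => ?_
    rw [fderiv_fun_mul (hA i j) (hu' j)]
    simp [mul_comm, add_comm]
  have hmulVec : ∀ i, DifferentiableAt ℝ (fun y => (A y *ᵥ u y) i) x := fun i =>
    DifferentiableAt.fun_sum (u := Finset.univ) fun j _ => (hA i j).fun_mul (hu' j)
  rw [divergence_eq_sum_fderiv_apply hmulVec]
  simp_rw [hprod, Finset.sum_add_distrib, hcol, Finset.sum_mul, trace, diag, mul_apply]
  rw [Finset.sum_comm]

end Divergence

section Piola

variable {n : ℕ} {Φ g : (Fin n → ℝ) → (Fin n → ℝ)} {x : Fin n → ℝ}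

theorem hasFDerivAt_jacobianMatrix_row (hΦ : DifferentiableAt ℝ (fderiv ℝ Φ) x) (l : Fin n) :
    HasFDerivAt (fun y => jacobianMatrix Φ y l)
      (ContinuousLinearMap.pi fun k => ContinuousLinearMap.proj l ∘L
        (fderiv ℝ (fderiv ℝ Φ) x).flip (Pi.single k 1)) x := by
  refine hasFDerivAt_pi.2 fun k => ?_
  simp_rw [jacobianMatrix_apply]
  have happly : HasFDerivAt (fun y => fderiv ℝ Φ y (Pi.single k 1))
      ((fderiv ℝ (fderiv ℝ Φ) x).flip (Pi.single k 1)) x := by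
    simpa using hΦ.hasFDerivAt.clm_apply (hasFDerivAt_const (Pi.single k 1) x)
  exact hasFDerivAt_pi'.1 happly l

theorem divergence_adjugate_jacobianMatrix_col (hΦ : DifferentiableAt ℝ (fderiv ℝ Φ) x)
    (hsymm : IsSymmSndFDerivAt ℝ Φ x) (j : Fin n) :
    divergence (fun y i => (jacobianMatrix Φ y).adjugate i j) x = 0 := by
  have hrow := hasFDerivAt_jacobianMatrix_row hΦ
  have hrow_diff := fun l => (hrow l).differentiableAt
  let hessian (l : Fin n) : Matrix (Fin n) (Fin n) ℝ :=
    of fun i k => fderiv ℝ (fderiv ℝ Φ) x (Pi.single i 1) (Pi.single k 1) l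
  have hessian_symm : ∀ l, (hessian l).IsSymm := fun l =>
    IsSymm.ext fun i k => congrFun (hsymm.eq _ _) l
  have hrow_deriv : ∀ l i,
      fderiv ℝ (fun y => jacobianMatrix Φ y l) x (Pi.single i 1) = hessian l i := by
    intro l i
    rw [(hrow l).fderiv]
    rfl
  rw [divergence_eq_sum_fderiv_apply fun i => differentiableAt_adjugate_apply hrow_diff i j]
  simp_rw [fderiv_adjugate_apply hrow_diff, hrow_deriv]
  rw [Finset.sum_comm]
  refine Finset.sum_eq_zero fun l hl => ?_
  have hjl : j ≠ l := by simpa [eq_comm] using hl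
  exact sum_det_updateRow_single_updateRow_eq_zero _ hjl (hessian_symm l)

theorem divergence_adjugate_jacobianMatrix_mulVec (hΦ : DifferentiableAt ℝ Φ x)
    (hΦ' : DifferentiableAt ℝ (fderiv ℝ Φ) x) (hsymm : IsSymmSndFDerivAt ℝ Φ x)
    (hg : DifferentiableAt ℝ g (Φ x)) :
    divergence (fun y => (jacobianMatrix Φ y).adjugate *ᵥ g (Φ y)) x =
      (jacobianMatrix Φ x).det * divergence g (Φ x) := by
  have hadj := differentiableAt_adjugate_apply fun l =>
    (hasFDerivAt_jacobianMatrix_row hΦ' l).differentiableAt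
  have hgΦ : DifferentiableAt ℝ (fun y => g (Φ y)) x := hg.comp x hΦ
  calc divergence (fun y => (jacobianMatrix Φ y).adjugate *ᵥ g (Φ y)) x
      = ((jacobianMatrix Φ x).adjugate * jacobianMatrix (fun y => g (Φ y)) x).trace := by
        rw [divergence_mulVec hadj hgΦ]
        simp [divergence_adjugate_jacobianMatrix_col hΦ' hsymm]
    _ = (jacobianMatrix g (Φ x) * (jacobianMatrix Φ x * (jacobianMatrix Φ x).adjugate)).trace := by
        rw [jacobianMatrix_comp hg hΦ, trace_mul_comm, Matrix.mul_assoc]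
    _ = (jacobianMatrix Φ x).det * divergence g (Φ x) := by
        rw [mul_adjugate, mul_smul_one, trace_smul, smul_eq_mul,
          divergence_eq_trace_jacobianMatrix]

theorem piola_identity_general (hΦ : ContDiffAt ℝ 2 Φ x) (hdet : (jacobianMatrix Φ x).det ≠ 0)
    (hg : DifferentiableAt ℝ g (Φ x)) :
    divergence
      (fun y => (jacobianMatrix Φ y).det • ((jacobianMatrix Φ y)⁻¹.mulVec (g (Φ y)))) x =
      (jacobianMatrix Φ x).det * divergence g (Φ x) := by
  have hΦ' : DifferentiableAt ℝ (fderiv ℝ Φ) x :=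
    (hΦ.fderiv_right one_add_one_eq_two.le).differentiableAt one_ne_zero
  have hdet_diff : DifferentiableAt ℝ (fun y => (jacobianMatrix Φ y).det) x :=
    differentiableAt_det fun l => (hasFDerivAt_jacobianMatrix_row hΦ' l).differentiableAt
  have hadj : (fun y => (jacobianMatrix Φ y).det • ((jacobianMatrix Φ y)⁻¹ *ᵥ g (Φ y))) =ᶠ[nhds x]
      fun y => (jacobianMatrix Φ y).adjugate *ᵥ g (Φ y) := by
    filter_upwards [hdet_diff.continuousAt.eventually_ne hdet] with y hy
    rw [det_smul_inv_mulVec_eq_cramer _ _ hy.isUnit, cramer_eq_adjugate_mulVec]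
  rw [divergence, hadj.fderiv_eq]
  exact divergence_adjugate_jacobianMatrix_mulVec (hΦ.differentiableAt two_ne_zero) hΦ'
    (hΦ.isSymmSndFDerivAt (by simp)) hg

end Piola

/-- **Piola identity.**
Let `Ω̂, Ω̆ ⊆ ℝⁿ` be open sets and `Φ : Ω̂ → Ω̆` a bijective `C²` map with `C²`
inverse and everywhere positive Jacobian determinant on `Ω̂`.  Let `g : Ω̆ → ℝⁿ`
be `C¹` and let `ĝ(x̂) = det DΦ(x̂) · DΦ(x̂)⁻¹ g(Φ(x̂))` be its Piola transform.
Then `div ĝ(x̂) = det DΦ(x̂) · (div g)(Φ(x̂))` for every `x̂ ∈ Ω̂`. -/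
theorem piola_identity
    (n : ℕ) (hn : 1 ≤ n)
    (Ωhat Ωphys : Set (Fin n → ℝ))
    (hΩhat_open : IsOpen Ωhat) (hΩphys_open : IsOpen Ωphys)
    (Φ Ψ : (Fin n → ℝ) → (Fin n → ℝ))
    (hΦmaps : Set.MapsTo Φ Ωhat Ωphys) (hΨmaps : Set.MapsTo Ψ Ωphys Ωhat)
    (hΨΦ : ∀ x ∈ Ωhat, Ψ (Φ x) = x) (hΦΨ : ∀ y ∈ Ωphys, Φ (Ψ y) = y)
    (hΦC2 : ContDiffOn ℝ 2 Φ Ωhat) (hΨC2 : ContDiffOn ℝ 2 Ψ Ωphys)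
    (hdet : ∀ x ∈ Ωhat, 0 < (jacobianMatrix Φ x).det)
    (g : (Fin n → ℝ) → (Fin n → ℝ)) (hg : ContDiffOn ℝ 1 g Ωphys) :
    ∀ x ∈ Ωhat,
      divergence
        (fun y => (jacobianMatrix Φ y).det • ((jacobianMatrix Φ y)⁻¹.mulVec (g (Φ y)))) x =
        (jacobianMatrix Φ x).det * divergence g (Φ x) := by
  intro x hx
  exact piola_identity_general (hΦC2.contDiffAt (hΩhat_open.mem_nhds hx)) (hdet x hx).ne'
    ((hg.contDiffAt (hΩphys_open.mem_nhds (hΦmaps hx))).differentiableAt one_ne_zero)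
end

section
/- Let d ≥ 1, r ∈ ℕ, p ∈ [1,∞), s ∈ (0,1), and μ₀ > 0. Then there exists a constant C > 0, depending only on d, r, s, p and μ₀, such that for every d-dimensional simplex T ⊆ ℝ^d with shape measure μ(T) ≤ μ₀ and every Lagrange point x ∈ 𝔏_r(T), the Lagrange basis polynomial Φ^T_{r,x} satisfies |Φ^T_{r,x}|_{W^{s,p}(T)} ≤ C · h_T^{d/p − s}, where h_T is the diameter of T. -/
/-!
In barycentric coordinates `w = ∑ aᵢ xᵢ` put `t = r a`, so that `∑ tᵢ = r` and the Lagrange points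
become the points `α ∈ ℕ^{d+1}` with `|α| = r`. On this hyperplane the products of falling
factorials of total order exactly `r` span all polynomials of degree at most `r`, because a product
of order `k < r` is raised by multiplying it with the nonzero constant `∑ tⱼ - k = r - k`; and such
a product of index `α` vanishes at every lattice point other than `α`. Hence
`P (∑ aᵢ xᵢ) = ∑_α P(y_α) φ_α(a)` with functions `φ_α` that do not depend on the simplex, and `P` is
Lipschitz in `a` with a constant proportional to its largest nodal value.

A barycentric coordinate `a = aᵢ` maps `T` into `[0, 1]`. In an orthonormal basis starting along its
gradient, `T` lies in a box with one side `1 / ‖∇a‖` and all others at most `h`, so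
`vol T · ‖∇a‖ ≤ h ^ (d - 1)`, that is, `‖∇a‖ ≤ μ(T) / h`.

Finally, for a `K`-Lipschitz `v` the Gagliardo integrand is at most `K^p ‖x - y‖ ^ (p (1 - s) - d)`,
which is integrable since `s < 1`; scaling its integral to the unit ball bounds the seminorm by a
multiple of `K h ^ (d / p + 1 - s)`, and `K` is of order `1 / h`.
-/

open MeasureTheory
open scoped Classical

/-- The Sobolev–Slobodeckij (Gagliardo) seminorm
`( ∫_T ∫_T |v(x) − v(y)|^p / ‖x − y‖^{d + s p} dx dy )^{1/p}` of a function on a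
subset `T` of Euclidean `d`-space. -/
noncomputable def gagliardoSeminorm (d : ℕ) (s p : ℝ)
    (T : Set (EuclideanSpace ℝ (Fin d))) (v : EuclideanSpace ℝ (Fin d) → ℝ) : ℝ :=
  (∫ x in T, ∫ y in T, |v x - v y| ^ p / ‖x - y‖ ^ ((d : ℝ) + s * p)) ^ (1 / p)

/-- The set of degree-`r` Lagrange points of the simplex with vertices
`x 0, …, x d`, namely all points `(α₀ x₀ + … + α_d x_d)/r` with `|α| = r`. -/
def lagrangePoints (d r : ℕ) (x : Fin (d + 1) → EuclideanSpace ℝ (Fin d)) :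
    Set (EuclideanSpace ℝ (Fin d)) :=
  {pt | ∃ α : Fin (d + 1) → ℕ, (∑ i, α i) = r ∧
    pt = (r : ℝ)⁻¹ • ∑ i, (α i : ℝ) • x i}

open scoped NNReal

section FallingProducts

variable {ι K : Type*} [Fintype ι]

/-- The product of the falling factorials `tᵢ (tᵢ - 1) ⋯ (tᵢ - αᵢ + 1)`. -/
noncomputable def fallingProd [CommRing K] (α : ι → ℕ) (t : ι → K) : K :=
  ∏ i, (descPochhammer K (α i)).eval (t i)

theorem fallingProd_natCast [CommRing K] (α β : ι → ℕ) :
    fallingProd α (fun i => (β i : K)) = ∏ i, ((β i).descFactorial (α i) : K) := by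
  simp only [fallingProd, descPochhammer_eval_eq_descFactorial]

theorem fallingProd_natCast_self_ne_zero [Field K] [CharZero K] (α : ι → ℕ) :
    fallingProd α (fun i => (α i : K)) ≠ 0 := by
  simp [fallingProd_natCast, Finset.prod_ne_zero_iff]

theorem fallingProd_natCast_eq_zero [CommRing K] {α β : ι → ℕ} (hsum : ∑ i, α i = ∑ i, β i)
    (hne : α ≠ β) : fallingProd α (fun i => (β i : K)) = 0 := by
  obtain ⟨i, hi⟩ : ∃ i, β i < α i := by
    by_contra! hle
    exact hne (funext fun i =>
      (Finset.sum_eq_sum_iff_of_le fun i _ => hle i).1 hsum i (Finset.mem_univ i))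
  rw [fallingProd_natCast]
  exact Finset.prod_eq_zero (Finset.mem_univ i)
    (by rw [Nat.descFactorial_eq_zero_iff_lt.2 hi, Nat.cast_zero])

theorem fallingProd_add_single [CommRing K] [DecidableEq ι] (α : ι → ℕ) (j : ι) (t : ι → K) :
    fallingProd (α + Pi.single j 1) t = (t j - α j) * fallingProd α t := by
  have hoff : ∀ i ∈ Finset.univ.erase j,
      (descPochhammer K ((α + Pi.single j 1 : ι → ℕ) i)).eval (t i) =
        (descPochhammer K (α i)).eval (t i) := fun i hi => by
    simp [Finset.ne_of_mem_erase hi]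
  simp only [fallingProd, ← Finset.mul_prod_erase _ _ (Finset.mem_univ j)]
  rw [Finset.prod_congr rfl hoff, Pi.add_apply, Pi.single_eq_same, descPochhammer_succ_eval]
  ring

/-- The functions on the hyperplane `∑ tᵢ = r` spanned by the falling products of order `k`. -/
noncomputable def fallingSpan (ι K : Type*) [Fintype ι] [Field K] (r k : ℕ) :
    Submodule K ({t : ι → K // ∑ i, t i = r} → K) :=
  Submodule.span K ((fun α t => fallingProd α t.1) '' {α : ι → ℕ | ∑ i, α i = k})

variable [Field K] {r k : ℕ}

/-- The Lagrange basis function of degree `r` of the node `α / r`, in barycentric coordinates. -/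
noncomputable def barycentricLagrange (r : ℕ) (α : ι → ℕ) (a : ι → K) : K :=
  fallingProd α ((r : K) • a) / fallingProd α fun i => (α i : K)

theorem fallingProd_mem_fallingSpan (r : ℕ) {α : ι → ℕ} (hα : ∑ i, α i = k) :
    (fun t => fallingProd α t.1) ∈ fallingSpan ι K r k :=
  Submodule.subset_span ⟨α, hα, rfl⟩

theorem fallingProd_add_single_mem_fallingSpan [DecidableEq ι] (r : ℕ) {α : ι → ℕ}
    (hα : ∑ i, α i = k) (j : ι) :
    (fun t => fallingProd (α + Pi.single j 1) t.1) ∈ fallingSpan ι K r (k + 1) :=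
  fallingProd_mem_fallingSpan r (by simp [Finset.sum_add_distrib, hα])

/-- Summing `fallingProd_add_single` over `j` multiplies a falling product of order `k` by
`∑ tⱼ - k`, which on the hyperplane is the nonzero constant `r - k`. -/
theorem fallingSpan_le_succ [CharZero K] (hk : k < r) :
    fallingSpan ι K r k ≤ fallingSpan ι K r (k + 1) := by
  rw [fallingSpan, Submodule.span_le]
  rintro _ ⟨α, hα : ∑ i, α i = k, rfl⟩
  have hrk : (r : K) - k ≠ 0 := sub_ne_zero.2 (by exact_mod_cast hk.ne')
  have hraise : (fun t : {t : ι → K // ∑ i, t i = r} => fallingProd α t.1) =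
      ((r : K) - k)⁻¹ • ∑ j, fun t => fallingProd (α + Pi.single j 1) t.1 := by
    ext t
    simp only [Pi.smul_apply, Finset.sum_apply, fallingProd_add_single, ← Finset.sum_mul,
      Finset.sum_sub_distrib, t.2, ← Nat.cast_sum, hα, smul_eq_mul, inv_mul_cancel_left₀ hrk]
  simp only [hraise]
  exact Submodule.smul_mem _ _
    (Submodule.sum_mem _ fun j _ => fallingProd_add_single_mem_fallingSpan r hα j)

theorem coord_mul_mem_fallingSpan [CharZero K] (hk : k < r)
    {f : {t : ι → K // ∑ i, t i = r} → K} (hf : f ∈ fallingSpan ι K r k) (j : ι) :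
    (fun t => t.1 j) * f ∈ fallingSpan ι K r (k + 1) := by
  suffices fallingSpan ι K r k ≤
      (fallingSpan ι K r (k + 1)).comap (LinearMap.mulLeft K fun t => t.1 j) from this hf
  conv_lhs => rw [fallingSpan]
  rw [Submodule.span_le]
  rintro _ ⟨α, hα, rfl⟩
  have hsplit : (fun t : {t : ι → K // ∑ i, t i = r} => t.1 j) * (fun t => fallingProd α t.1) =
      (fun t => fallingProd (α + Pi.single j 1) t.1) +
        (α j : K) • fun t => fallingProd α t.1 := by
    ext t
    simp only [Pi.mul_apply, Pi.add_apply, Pi.smul_apply, fallingProd_add_single, smul_eq_mul]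
    ring
  simp only [Submodule.comap_coe, Set.mem_preimage, LinearMap.mulLeft_apply, hsplit]
  exact Submodule.add_mem _ (fallingProd_add_single_mem_fallingSpan r hα j)
    (Submodule.smul_mem _ _ (fallingSpan_le_succ hk (fallingProd_mem_fallingSpan r hα)))

theorem one_mem_fallingSpan (r : ℕ) : 1 ∈ fallingSpan ι K r 0 := by
  have hone : (fun t : {t : ι → K // ∑ i, t i = r} => fallingProd 0 t.1) = 1 := by
    ext t
    simp [fallingProd]
  exact hone ▸ fallingProd_mem_fallingSpan r (by simp)

variable [CharZero K]

theorem fallingSpan_mono {l : ℕ} (hkl : k ≤ l) (hl : l ≤ r) :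
    fallingSpan ι K r k ≤ fallingSpan ι K r l := by
  induction l, hkl using Nat.le_induction with
  | base => exact le_rfl
  | succ l _ ih => exact (ih (by omega)).trans (fallingSpan_le_succ hl)

theorem linearForm_pow_mul_mem_fallingSpan (c : ι → K) {e : ℕ} (hke : k + e ≤ r)
    {f : {t : ι → K // ∑ i, t i = r} → K} (hf : f ∈ fallingSpan ι K r k) :
    (fun t => ∑ i, t.1 i * c i) ^ e * f ∈ fallingSpan ι K r (k + e) := by
  induction e with
  | zero => simpa using hf
  | succ e ih =>
    set g := (fun t : {t : ι → K // ∑ i, t i = r} => ∑ i, t.1 i * c i) ^ e * f with hg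
    have hexpand : (fun t : {t : ι → K // ∑ i, t i = r} => ∑ i, t.1 i * c i) ^ (e + 1) * f =
        ∑ i, c i • ((fun t => t.1 i) * g) := by
      ext t
      simp only [hg, pow_succ', mul_assoc, Pi.mul_apply, Finset.sum_apply, Pi.smul_apply,
        smul_eq_mul, Finset.sum_mul]
      exact Finset.sum_congr rfl fun i _ => by ring
    rw [hexpand]
    exact Submodule.sum_mem _ fun i _ =>
      Submodule.smul_mem _ _ (coord_mul_mem_fallingSpan (by omega) (ih (by omega)) i)

theorem prod_linearForm_pow_mem_fallingSpan {σ : Type*} (c : σ → ι → K) (m : σ → ℕ)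
    (s : Finset σ) (hm : ∑ k ∈ s, m k ≤ r) :
    ∏ k ∈ s, (fun t : {t : ι → K // ∑ i, t i = r} => ∑ i, t.1 i * c k i) ^ m k ∈
      fallingSpan ι K r (∑ k ∈ s, m k) := by
  induction s using Finset.induction_on with
  | empty => exact one_mem_fallingSpan r
  | insert k s hk ih =>
    rw [Finset.sum_insert hk] at hm ⊢
    rw [Finset.prod_insert hk, add_comm]
    exact linearForm_pow_mul_mem_fallingSpan (c k) (by omega) (ih (by omega))

theorem eval_linearCombination_mem_fallingSpan {σ : Type*} (x : ι → σ → K)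
    {P : MvPolynomial σ K} (hP : P.totalDegree ≤ r) :
    (fun t => MvPolynomial.eval (∑ i, t.1 i • x i) P) ∈ fallingSpan ι K r r := by
  have hexpand : (fun t : {t : ι → K // ∑ i, t i = r} =>
      MvPolynomial.eval (∑ i, t.1 i • x i) P) =
      ∑ m ∈ P.support, P.coeff m • ∏ k ∈ m.support, (fun t => ∑ i, t.1 i * x i k) ^ m k := by
    ext t
    simp [MvPolynomial.eval_eq, Finset.sum_apply, Finset.prod_apply]
  rw [hexpand]
  refine Submodule.sum_mem _ fun m hm => Submodule.smul_mem _ _ ?_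
  have hdeg : ∑ k ∈ m.support, m k ≤ r := (MvPolynomial.le_totalDegree hm).trans hP
  exact fallingSpan_mono hdeg le_rfl
    (prod_linearForm_pow_mem_fallingSpan (fun k i => x i k) m m.support hdeg)

theorem eq_sum_of_mem_fallingSpan [DecidableEq ι] {g : (ι → K) → K}
    (hg : (fun t => g t.1) ∈ fallingSpan ι K r r) {t : ι → K} (ht : ∑ i, t i = r) :
    g t = ∑ α ∈ Finset.univ.piAntidiag r,
      g (fun i => α i) * (fallingProd α t / fallingProd α fun i => (α i : K)) := by
  have hset : {α : ι → ℕ | ∑ i, α i = r} = ↑(Finset.univ.piAntidiag r : Finset (ι → ℕ)) := by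
    ext
    simp
  rw [fallingSpan, hset, Submodule.mem_span_image_finset_iff_exists_fun'] at hg
  obtain ⟨c, hc⟩ := hg
  have hg_eq : ∀ {t : ι → K}, ∑ i, t i = r →
      g t = ∑ α ∈ Finset.univ.piAntidiag r, c α * fallingProd α t := fun {t} ht => by
    simpa [Finset.sum_apply] using (congrFun hc ⟨t, ht⟩).symm
  rw [hg_eq ht]
  refine Finset.sum_congr rfl fun β hβ => ?_
  have hβsum : ∑ i, β i = r := by simpa using hβ
  have hcoeff : g (fun i => β i) = c β * fallingProd β fun i => (β i : K) := by
    rw [hg_eq (by rw [← Nat.cast_sum, hβsum])]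
    refine Finset.sum_eq_single_of_mem β hβ fun α hα hne => ?_
    rw [fallingProd_natCast_eq_zero (by simp_all) hne, mul_zero]
  rw [hcoeff, mul_assoc, mul_div_cancel₀ _ (fallingProd_natCast_self_ne_zero β)]

theorem eval_linearCombination_eq_sum_barycentricLagrange {σ : Type*} [DecidableEq ι]
    (hr : r ≠ 0) (x : ι → σ → K) {P : MvPolynomial σ K} (hP : P.totalDegree ≤ r)
    {a : ι → K} (ha : ∑ i, a i = 1) :
    MvPolynomial.eval (∑ i, a i • x i) P =
      ∑ α ∈ Finset.univ.piAntidiag r,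
        MvPolynomial.eval ((r : K)⁻¹ • ∑ i, (α i : K) • x i) P * barycentricLagrange r α a := by
  have hrescale : ∀ t : ι → K, ∑ i, t i • (r : K)⁻¹ • x i = (r : K)⁻¹ • ∑ i, t i • x i :=
    fun t => by simp only [Finset.smul_sum, smul_comm (r : K)⁻¹]
  have hnewton := eq_sum_of_mem_fallingSpan
    (g := fun t : ι → K => MvPolynomial.eval (∑ i, t i • (r : K)⁻¹ • x i) P)
    (eval_linearCombination_mem_fallingSpan (fun i => (r : K)⁻¹ • x i) hP)
    (t := (r : K) • a) (by simp [← Finset.mul_sum, ha])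
  have hcancel : (r : K)⁻¹ • ∑ i, ((r : K) • a) i • x i = ∑ i, a i • x i := by
    simp only [Pi.smul_apply, smul_assoc, ← Finset.smul_sum]
    rw [inv_smul_smul₀ (Nat.cast_ne_zero.2 hr)]
  simpa only [hrescale, hcancel, barycentricLagrange] using hnewton

end FallingProducts

theorem exists_lipschitzOnWith_barycentricLagrange {ι : Type*} [Fintype ι] (r : ℕ)
    (α : ι → ℕ) {S : Set (ι → ℝ)} (hS : IsCompact S) :
    ∃ L, LipschitzOnWith L (barycentricLagrange r α) S := by
  have hsmooth : ContDiff ℝ 1 (barycentricLagrange (K := ℝ) r α) := by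
    unfold barycentricLagrange fallingProd
    simp only [← Polynomial.coe_aeval_eq_eval]
    refine ContDiff.div_const (contDiff_prod fun i _ => ?_) _
    exact ((descPochhammer ℝ (α i)).contDiff_aeval 1).comp (by fun_prop)
  exact hsmooth.locallyLipschitz.locallyLipschitzOn.exists_lipschitzOnWith_of_compact hS

theorem exists_lipschitzOnWith_eval_linearCombination (ι σ : Type*) [Fintype ι] {r : ℕ}
    (hr : r ≠ 0) :
    ∃ L : ℝ≥0, ∀ (x : ι → σ → ℝ) (P : MvPolynomial σ ℝ), P.totalDegree ≤ r →
      ∀ M : ℝ≥0, (∀ α : ι → ℕ, ∑ i, α i = r →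
        |MvPolynomial.eval ((r : ℝ)⁻¹ • ∑ i, (α i : ℝ) • x i) P| ≤ M) →
      LipschitzOnWith (L * M) (fun a => MvPolynomial.eval (∑ i, a i • x i) P)
        (stdSimplex ℝ ι) := by
  choose L hL using fun α : ι → ℕ =>
    exists_lipschitzOnWith_barycentricLagrange r α (isCompact_stdSimplex ℝ ι)
  refine ⟨∑ α ∈ Finset.univ.piAntidiag r, L α, fun x P hP M hM => ?_⟩
  refine LipschitzOnWith.of_dist_le_mul fun a ha b hb => ?_
  have hterm : ∀ α ∈ Finset.univ.piAntidiag r,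
      |MvPolynomial.eval ((r : ℝ)⁻¹ • ∑ i, (α i : ℝ) • x i) P *
        (barycentricLagrange r α a - barycentricLagrange r α b)| ≤
      L α * M * dist a b := fun α hα => by
    rw [abs_mul, mul_comm (L α : ℝ), mul_assoc]
    exact mul_le_mul (hM α (by simpa using hα)) ((hL α).dist_le_mul a ha b hb)
      (abs_nonneg _) M.2
  simp only [Real.dist_eq, eval_linearCombination_eq_sum_barycentricLagrange hr x hP ha.2,
    eval_linearCombination_eq_sum_barycentricLagrange hr x hP hb.2, ← Finset.sum_sub_distrib,
    ← mul_sub]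
  refine (Finset.abs_sum_le_sum_abs _ _).trans ((Finset.sum_le_sum hterm).trans_eq ?_)
  push_cast
  simp only [Finset.sum_mul]

theorem diam_coord_image_convexHull_le {ι V : Type*} [AddCommGroup V] [Module ℝ V] [Finite ι]
    (b : AffineBasis ι ℝ V) (i : ι) :
    Metric.diam (b.coord i '' convexHull ℝ (Set.range b)) ≤ 1 := by
  have : Fintype ι := Fintype.ofFinite ι
  have hunit : b.coord i '' convexHull ℝ (Set.range b) ⊆ Set.Icc 0 1 := by
    rw [b.convexHull_eq_nonneg_coord]
    rintro _ ⟨w, hw, rfl⟩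
    refine ⟨hw i, (Finset.single_le_sum (fun j _ => hw j) (Finset.mem_univ i)).trans_eq ?_⟩
    exact b.sum_coord_apply_eq_one w
  exact (Metric.diam_mono hunit (Metric.isBounded_Icc 0 1)).trans_eq (by simp [Real.diam_Icc])

section ConvexHullRange

variable {ι E : Type*} [NormedAddCommGroup E] [NormedSpace ℝ E]

theorem isBounded_convexHull_range [Finite ι] (x : ι → E) :
    Bornology.IsBounded (convexHull ℝ (Set.range x)) :=
  isBounded_convexHull.2 (Set.finite_range x).isBounded

theorem diam_convexHull_range_pos [Finite ι] [Nontrivial ι] {x : ι → E}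
    (hx : Function.Injective x) :
    0 < Metric.diam (convexHull ℝ (Set.range x)) := by
  obtain ⟨i, j, hij⟩ := exists_pair_ne ι
  rw [convexHull_diam]
  exact (dist_pos.2 (hx.ne hij)).trans_le (Metric.dist_le_diam_of_mem
    (Set.finite_range x).isBounded (Set.mem_range_self i) (Set.mem_range_self j))

end ConvexHullRange

section ShapeMeasure

variable {ι E : Type*} [NormedAddCommGroup E] [InnerProductSpace ℝ E]

theorem lipschitzWith_repr_apply [Fintype ι] (b : OrthonormalBasis ι ℝ E) (i : ι) :
    LipschitzWith 1 fun y => b.repr y i :=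
  LipschitzWith.of_dist_le_mul fun y z => by
    rw [← b.repr.dist_map, NNReal.coe_one, one_mul]
    exact PiLp.dist_apply_le _ _ i

theorem exists_orthonormalBasis_norm_mul_repr_eq [FiniteDimensional ℝ E]
    {ℓ : StrongDual ℝ E} (hℓ : ℓ ≠ 0) :
    ∃ (b : OrthonormalBasis (Fin (Module.finrank ℝ E)) ℝ E) (i₀ : Fin (Module.finrank ℝ E)),
      ∀ y, ‖ℓ‖ * b.repr y i₀ = ℓ y := by
  set g := (InnerProductSpace.toDual ℝ E).symm ℓ with hg
  have hg0 : g ≠ 0 := by simpa [hg] using hℓ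
  have : Nontrivial E := nontrivial_of_ne g 0 hg0
  have i₀ : Fin (Module.finrank ℝ E) := ⟨0, Module.finrank_pos⟩
  have hunit : Orthonormal ℝ (({i₀} : Set _).domRestrict fun _ => ‖g‖⁻¹ • g) := by
    refine ⟨fun _ => ?_, fun i j hij => (hij (Subsingleton.elim i j)).elim⟩
    rw [Set.domRestrict_apply, norm_smul, norm_inv, norm_norm,
      inv_mul_cancel₀ (norm_ne_zero_iff.2 hg0)]
  obtain ⟨b, hb⟩ := hunit.exists_orthonormalBasis_extension_of_card_eq (by simp)
  refine ⟨b, i₀, fun y => ?_⟩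
  rw [b.repr_apply_apply, hb i₀ rfl, real_inner_smul_left, hg,
    InnerProductSpace.toDual_symm_apply, LinearIsometryEquiv.norm_map,
    mul_inv_cancel_left₀ (norm_ne_zero_iff.2 hℓ)]

variable [FiniteDimensional ℝ E] [MeasurableSpace E] [BorelSpace E]

theorem volume_real_le_prod_diam_repr [Fintype ι] (b : OrthonormalBasis ι ℝ E) {T : Set E}
    (hT : Bornology.IsBounded T) :
    volume.real T ≤ ∏ i, Metric.diam ((fun y => b.repr y i) '' T) := by
  have hfinite : ∀ i, Metric.ediam ((fun y => b.repr y i) '' T) ≠ ⊤ := fun i =>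
    ((lipschitzWith_repr_apply b i).isBounded_image hT).ediam_ne_top
  have hcoord : MeasurePreserving (fun y => (b.repr y).ofLp) :=
    (PiLp.volume_preserving_ofLp ι).comp b.measurePreserving_repr
  have hemb : MeasurableEmbedding fun y => (b.repr y).ofLp :=
    (b.repr.toHomeomorph.trans (PiLp.homeomorph 2 fun _ : ι => ℝ)).measurableEmbedding
  have hvol : volume T ≤ ∏ i, Metric.ediam ((fun y => b.repr y i) '' T) := by
    rw [← Set.preimage_image_eq T hemb.injective, hcoord.measure_preimage_emb hemb]
    refine (Real.volume_pi_le_prod_diam _).trans_eq ?_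
    simp only [Set.image_image, Set.preimage_image_eq T hemb.injective, Function.eval]
  simpa only [ENNReal.toReal_prod, Measure.real, Metric.diam] using
    ENNReal.toReal_mono (ENNReal.prod_ne_top fun i _ => hfinite i) hvol

theorem volume_real_mul_norm_mul_diam_le {T : Set E} (hT : Bornology.IsBounded T)
    (ℓ : StrongDual ℝ E) :
    volume.real T * ‖ℓ‖ * Metric.diam T ≤
      Metric.diam (ℓ '' T) * Metric.diam T ^ Module.finrank ℝ E := by
  rcases eq_or_ne ℓ 0 with rfl | hℓ
  · simpa using by positivity
  obtain ⟨b, i₀, hb⟩ := exists_orthonormalBasis_norm_mul_repr_eq hℓ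
  have hdiam : ∀ i, Metric.diam ((fun y => b.repr y i) '' T) ≤ Metric.diam T := fun i => by
    simpa using (lipschitzWith_repr_apply b i).diam_image_le T hT
  have hscale : ‖ℓ‖ * Metric.diam ((fun y => b.repr y i₀) '' T) = Metric.diam (ℓ '' T) := by
    rw [← norm_norm ℓ, ← diam_smul₀, ← Set.image_smul, Set.image_image]
    simp only [smul_eq_mul, hb]
  have hslab : volume.real T ≤ Metric.diam ((fun y => b.repr y i₀) '' T) *
      Metric.diam T ^ (Module.finrank ℝ E - 1) := by
    refine (volume_real_le_prod_diam_repr b hT).trans ?_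
    rw [← Finset.mul_prod_erase _ _ (Finset.mem_univ i₀)]
    refine mul_le_mul_of_nonneg_left ?_ Metric.diam_nonneg
    exact (Finset.prod_le_prod (fun i _ => Metric.diam_nonneg) fun i _ => hdiam i).trans_eq
      (by simp)
  calc volume.real T * ‖ℓ‖ * Metric.diam T
      ≤ Metric.diam ((fun y => b.repr y i₀) '' T) * Metric.diam T ^ (Module.finrank ℝ E - 1) *
          ‖ℓ‖ * Metric.diam T := by gcongr
    _ = ‖ℓ‖ * Metric.diam ((fun y => b.repr y i₀) '' T) *
          (Metric.diam T ^ (Module.finrank ℝ E - 1) * Metric.diam T) := by ring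
    _ = Metric.diam (ℓ '' T) * Metric.diam T ^ Module.finrank ℝ E := by
        rw [hscale, ← pow_succ, Nat.sub_add_cancel i₀.pos]

/-- The shape measure `h_T ^ d / vol T` of a bounded set `T` in a `d`-dimensional space. -/
noncomputable def shapeMeasure (T : Set E) : ℝ :=
  Metric.diam T ^ Module.finrank ℝ E / volume.real T

theorem shapeMeasure_nonneg (T : Set E) : 0 ≤ shapeMeasure T := by
  unfold shapeMeasure
  positivity

theorem norm_mul_diam_le_diam_image_mul_shapeMeasure {T : Set E} (hT : Bornology.IsBounded T)
    (hvol : 0 < volume.real T) (ℓ : StrongDual ℝ E) :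
    ‖ℓ‖ * Metric.diam T ≤ Metric.diam (ℓ '' T) * shapeMeasure T := by
  rw [shapeMeasure, mul_div_assoc', le_div_iff₀ hvol]
  linarith [volume_real_mul_norm_mul_diam_le hT ℓ]

theorem dist_affineMap_mul_diam_le {T : Set E} (hT : Bornology.IsBounded T)
    (hvol : 0 < volume.real T) (φ : E →ᵃ[ℝ] ℝ) (w w' : E) :
    dist (φ w) (φ w') * Metric.diam T ≤
      Metric.diam (φ '' T) * shapeMeasure T * dist w w' := by
  set ℓ : StrongDual ℝ E := φ.linear.toContinuousLinearMap
  have hφ : ∀ y, φ y = ℓ y + φ 0 := fun y => congrFun φ.decomp y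
  have himage : φ '' T = (· + φ 0) '' (ℓ '' T) := by
    rw [Set.image_image]
    exact Set.image_congr fun y _ => hφ y
  calc dist (φ w) (φ w') * Metric.diam T
      ≤ ‖ℓ‖ * dist w w' * Metric.diam T := by
        gcongr
        rw [hφ w, hφ w', dist_add_right]
        exact ℓ.dist_le_opNorm w w'
    _ = ‖ℓ‖ * Metric.diam T * dist w w' := by ring
    _ ≤ Metric.diam (φ '' T) * shapeMeasure T * dist w w' := by
        rw [himage, (isometry_add_right (φ 0)).diam_image]
        exact mul_le_mul_of_nonneg_right
          (norm_mul_diam_le_diam_image_mul_shapeMeasure hT hvol ℓ) dist_nonneg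

theorem volume_real_convexHull_affineBasis_pos [Finite ι] (b : AffineBasis ι ℝ E) :
    0 < volume.real (convexHull ℝ (Set.range b)) := by
  have : Fintype ι := Fintype.ofFinite ι
  exact ENNReal.toReal_pos (Measure.measure_pos_of_nonempty_interior _
    ⟨_, b.centroid_mem_interior_convexHull⟩).ne' (isBounded_convexHull_range b).measure_lt_top.ne

theorem lipschitzWith_affineBasis_coord [Finite ι] [Nontrivial ι] (b : AffineBasis ι ℝ E)
    (i : ι) :
    LipschitzWith (shapeMeasure (convexHull ℝ (Set.range b)) /
      Metric.diam (convexHull ℝ (Set.range b))).toNNReal (b.coord i) := by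
  have hdiam := diam_convexHull_range_pos b.ind.injective
  have hshape := shapeMeasure_nonneg (convexHull ℝ (Set.range b))
  refine LipschitzWith.of_dist_le_mul fun w w' => ?_
  rw [Real.coe_toNNReal _ (by positivity), div_mul_eq_mul_div, le_div_iff₀ hdiam]
  refine (dist_affineMap_mul_diam_le (isBounded_convexHull_range b)
    (volume_real_convexHull_affineBasis_pos b) (b.coord i) w w').trans ?_
  exact mul_le_mul_of_nonneg_right
    (mul_le_of_le_one_left hshape (diam_coord_image_convexHull_le b i)) dist_nonneg

end ShapeMeasure

theorem nonempty_lagrangePoints (d r : ℕ) (x : Fin (d + 1) → EuclideanSpace ℝ (Fin d)) :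
    (lagrangePoints d r x).Nonempty :=
  ⟨_, Pi.single 0 r, by simp, rfl⟩

theorem exists_lipschitzOnWith_eval_of_abs_le_lagrangePoints {d r : ℕ} (hd : 1 ≤ d)
    (hr : 1 ≤ r) :
    ∃ L : ℝ≥0, ∀ x : Fin (d + 1) → EuclideanSpace ℝ (Fin d), AffineIndependent ℝ x →
      ∀ P : MvPolynomial (Fin d) ℝ, P.totalDegree ≤ r → ∀ M : ℝ≥0,
        (∀ y ∈ lagrangePoints d r x, |MvPolynomial.eval (fun i => y i) P| ≤ M) →
        LipschitzOnWith (L * M * (shapeMeasure (convexHull ℝ (Set.range x)) /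
            Metric.diam (convexHull ℝ (Set.range x))).toNNReal)
          (fun w => MvPolynomial.eval (fun i => w i) P) (convexHull ℝ (Set.range x)) := by
  have : Nontrivial (Fin (d + 1)) := Fin.nontrivial_iff_two_le.2 (by omega)
  obtain ⟨L, hL⟩ := exists_lipschitzOnWith_eval_linearCombination (Fin (d + 1)) (Fin d)
    (Nat.one_le_iff_ne_zero.1 hr)
  refine ⟨L, fun x hx P hP M hM => ?_⟩
  obtain ⟨b, rfl⟩ : ∃ b : AffineBasis (Fin (d + 1)) ℝ (EuclideanSpace ℝ (Fin d)), ⇑b = x :=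
    ⟨⟨x, hx, hx.affineSpan_eq_top_iff_card_eq_finrank_add_one.2 (by simp)⟩, rfl⟩
  have hcoord : LipschitzWith _ fun w i => b.coord i w :=
    LipschitzWith.of_dist_le_mul fun w w' => (dist_pi_le_iff (by positivity)).2 fun i =>
      (lipschitzWith_affineBasis_coord b i).dist_le_mul w w'
  have hmaps : Set.MapsTo (fun w i => b.coord i w) (convexHull ℝ (Set.range b))
      (stdSimplex ℝ (Fin (d + 1))) := fun w hw =>
    ⟨by simpa [b.convexHull_eq_nonneg_coord] using hw, b.sum_coord_apply_eq_one w⟩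
  have hcombination : ∀ w, ∑ i, b.coord i w • (b i).ofLp = w.ofLp := fun w => by
    simpa only [WithLp.ofLp_sum, WithLp.ofLp_smul] using
      congrArg WithLp.ofLp (b.linear_combination_coord_eq_self w)
  have hnodes : ∀ α : Fin (d + 1) → ℕ, ∑ i, α i = r →
      |MvPolynomial.eval ((r : ℝ)⁻¹ • ∑ i, (α i : ℝ) • (b i).ofLp) P| ≤ M := fun α hα => by
    simpa only [WithLp.ofLp_sum, WithLp.ofLp_smul] using hM _ ⟨α, hα, rfl⟩
  simpa only [Function.comp_def, hcombination] using
    (hL (fun i => (b i).ofLp) P hP M hnodes).comp hcoord.lipschitzOnWith hmaps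

section Gagliardo

variable {E : Type*} [NormedAddCommGroup E] [NormedSpace ℝ E] [FiniteDimensional ℝ E]
  [MeasurableSpace E] [BorelSpace E] (μ : Measure E) [μ.IsAddHaarMeasure] {T : Set E} {q : ℝ}

theorem integrableOn_norm_rpow_of_isBounded [Nontrivial E] (hq : -(Module.finrank ℝ E) < q)
    (hT : Bornology.IsBounded T) : IntegrableOn (fun z => ‖z‖ ^ q) T μ := by
  have hloc : LocallyIntegrable (fun z : E => ‖z‖ ^ q) μ :=
    locallyIntegrable_of_norm_le_rpow (C := 1) (α := -q) Module.finrank_pos (by linarith)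
      (.of_forall fun z => by simp [abs_of_nonneg, Real.rpow_nonneg])
      (measurable_norm.pow_const q).aestronglyMeasurable
  obtain ⟨R, hR⟩ := hT.subset_closedBall 0
  exact (hloc.integrableOn_isCompact (isCompact_closedBall 0 R)).mono_set hR

theorem setIntegral_closedBall_norm_rpow {R : ℝ} (hR : 0 < R) :
    ∫ z in Metric.closedBall (0 : E) R, ‖z‖ ^ q ∂μ =
      R ^ (q + Module.finrank ℝ E) * ∫ z in Metric.closedBall (0 : E) 1, ‖z‖ ^ q ∂μ := by
  have hscale := Measure.setIntegral_comp_smul_of_pos μ (fun z : E => ‖z‖ ^ q)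
    (Metric.closedBall 0 1) hR
  simp only [smul_unitClosedBall_of_nonneg hR.le, norm_smul, Real.norm_of_nonneg hR.le,
    Real.mul_rpow hR.le (norm_nonneg _), integral_const_mul, smul_eq_mul] at hscale
  rw [eq_inv_mul_iff_mul_eq₀ (by positivity)] at hscale
  rw [← hscale, Real.rpow_add hR, Real.rpow_natCast]
  ring

theorem integrableOn_norm_sub_rpow_of_isBounded [Nontrivial E]
    (hq : -(Module.finrank ℝ E) < q) (hT : Bornology.IsBounded T) (x : E) :
    IntegrableOn (fun y => ‖x - y‖ ^ q) T μ :=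
  (((μ.measurePreserving_sub_left x).integrableOn_comp_preimage
    (Homeomorph.subLeft x).measurableEmbedding).2
      (integrableOn_norm_rpow_of_isBounded μ hq
        ((IsometryEquiv.subLeft x).isometry.lipschitz.isBounded_image hT))).mono_set
          (Set.subset_preimage_image _ _)

theorem setIntegral_norm_sub_rpow_le [Nontrivial E] (hq : -(Module.finrank ℝ E) < q)
    (hT : Bornology.IsBounded T) (hdiam : 0 < Metric.diam T) {x : E} (hx : x ∈ T) :
    ∫ y in T, ‖x - y‖ ^ q ∂μ ≤
      Metric.diam T ^ (q + Module.finrank ℝ E) *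
        ∫ z in Metric.closedBall (0 : E) 1, ‖z‖ ^ q ∂μ := by
  have hsub : T ⊆ Metric.closedBall x (Metric.diam T) := fun y hy =>
    Metric.dist_le_diam_of_mem hT hy hx
  have hpre : Metric.closedBall x (Metric.diam T) =
      (x - ·) ⁻¹' Metric.closedBall 0 (Metric.diam T) := by
    ext y
    simp [dist_eq_norm, norm_sub_rev]
  calc ∫ y in T, ‖x - y‖ ^ q ∂μ
      ≤ ∫ y in Metric.closedBall x (Metric.diam T), ‖x - y‖ ^ q ∂μ :=
        setIntegral_mono_set
          (integrableOn_norm_sub_rpow_of_isBounded μ hq Metric.isBounded_closedBall x)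
          (.of_forall fun y => by positivity) (.of_forall hsub)
    _ = ∫ z in Metric.closedBall 0 (Metric.diam T), ‖z‖ ^ q ∂μ := by
        rw [hpre]
        exact (μ.measurePreserving_sub_left x).setIntegral_preimage_emb
          (Homeomorph.subLeft x).measurableEmbedding (fun z => ‖z‖ ^ q) _
    _ = _ := setIntegral_closedBall_norm_rpow μ hdiam

theorem measureReal_le_diam_pow_mul (hT : Bornology.IsBounded T) :
    μ.real T ≤ Metric.diam T ^ Module.finrank ℝ E * μ.real (Metric.ball 0 1) := by
  rcases T.eq_empty_or_nonempty with rfl | ⟨x, hx⟩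
  · rw [measureReal_empty]
    positivity
  rw [← Measure.addHaar_real_closedBall μ x Metric.diam_nonneg]
  exact measureReal_mono (fun y hy => Metric.dist_le_diam_of_mem hT hy hx)
    measure_closedBall_lt_top.ne

theorem rpow_div_rpow_le_of_le_mul {a K t p c : ℝ} (ha : 0 ≤ a) (hK : 0 ≤ K) (ht : 0 ≤ t)
    (hp : 0 < p) (h : a ≤ K * t) : a ^ p / t ^ c ≤ K ^ p * t ^ (p - c) := by
  rcases ht.eq_or_lt with rfl | ht
  · obtain rfl : a = 0 := le_antisymm (by simpa using h) ha
    rw [Real.zero_rpow hp.ne', zero_div]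
    positivity
  · rw [Real.rpow_sub ht, mul_div_assoc', ← Real.mul_rpow hK ht.le]
    gcongr

theorem setIntegral_rpow_div_le_of_lipschitzOnWith [Nontrivial E] {p c : ℝ} (hp : 0 < p)
    (hc : c < Module.finrank ℝ E + p) (hmeas : MeasurableSet T) (hT : Bornology.IsBounded T)
    (hdiam : 0 < Metric.diam T) {v : E → ℝ} {K : ℝ≥0} (hv : LipschitzOnWith K v T) {x : E}
    (hx : x ∈ T) :
    ∫ y in T, |v x - v y| ^ p / ‖x - y‖ ^ c ∂μ ≤
      (K : ℝ) ^ p * (Metric.diam T ^ (p - c + Module.finrank ℝ E) *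
        ∫ z in Metric.closedBall (0 : E) 1, ‖z‖ ^ (p - c) ∂μ) := by
  have hq : -(Module.finrank ℝ E : ℝ) < p - c := by linarith
  have hpointwise : ∀ y ∈ T,
      |v x - v y| ^ p / ‖x - y‖ ^ c ≤ (K : ℝ) ^ p * ‖x - y‖ ^ (p - c) := fun y hy =>
    rpow_div_rpow_le_of_le_mul (abs_nonneg _) K.2 (norm_nonneg _) hp
      (by simpa [dist_eq_norm] using hv.dist_le_mul x hx y hy)
  calc ∫ y in T, |v x - v y| ^ p / ‖x - y‖ ^ c ∂μ
      ≤ ∫ y in T, (K : ℝ) ^ p * ‖x - y‖ ^ (p - c) ∂μ :=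
        integral_mono_of_nonneg (.of_forall fun y => by positivity)
          ((integrableOn_norm_sub_rpow_of_isBounded μ hq hT x).const_mul _)
          (ae_restrict_of_forall_mem hmeas hpointwise)
    _ = (K : ℝ) ^ p * ∫ y in T, ‖x - y‖ ^ (p - c) ∂μ := integral_const_mul _ _
    _ ≤ _ := by gcongr; exact setIntegral_norm_sub_rpow_le μ hq hT hdiam hx

theorem integral_integral_rpow_div_le_of_lipschitzOnWith [Nontrivial E] {p c : ℝ} (hp : 0 < p)
    (hc : c < Module.finrank ℝ E + p) (hmeas : MeasurableSet T) (hT : Bornology.IsBounded T)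
    (hdiam : 0 < Metric.diam T) {v : E → ℝ} {K : ℝ≥0} (hv : LipschitzOnWith K v T) :
    ∫ x in T, ∫ y in T, |v x - v y| ^ p / ‖x - y‖ ^ c ∂μ ∂μ ≤
      (∫ z in Metric.closedBall (0 : E) 1, ‖z‖ ^ (p - c) ∂μ) * μ.real (Metric.ball 0 1) *
        ((K : ℝ) ^ p * Metric.diam T ^ (p - c + 2 * Module.finrank ℝ E)) := by
  set n := Module.finrank ℝ E
  set J := ∫ z in Metric.closedBall (0 : E) 1, ‖z‖ ^ (p - c) ∂μ
  have : 0 ≤ J := integral_nonneg fun z => by positivity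
  calc ∫ x in T, ∫ y in T, |v x - v y| ^ p / ‖x - y‖ ^ c ∂μ ∂μ
      ≤ ∫ _ in T, (K : ℝ) ^ p * (Metric.diam T ^ (p - c + n) * J) ∂μ :=
        integral_mono_of_nonneg
          (.of_forall fun _ => integral_nonneg fun y => by positivity)
          (integrableOn_const hT.measure_lt_top.ne)
          (ae_restrict_of_forall_mem hmeas fun x hx =>
            setIntegral_rpow_div_le_of_lipschitzOnWith μ hp hc hmeas hT hdiam hv hx)
    _ = μ.real T * ((K : ℝ) ^ p * (Metric.diam T ^ (p - c + n) * J)) := by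
        rw [setIntegral_const, smul_eq_mul]
    _ ≤ Metric.diam T ^ n * μ.real (Metric.ball 0 1) *
          ((K : ℝ) ^ p * (Metric.diam T ^ (p - c + n) * J)) := by
        gcongr
        exact measureReal_le_diam_pow_mul μ hT
    _ = J * μ.real (Metric.ball 0 1) *
          ((K : ℝ) ^ p * Metric.diam T ^ (p - c + 2 * n)) := by
        rw [two_mul, ← add_assoc, Real.rpow_add_natCast hdiam.ne' (p - c + n)]
        ring

theorem exists_gagliardoSeminorm_le_of_lipschitzOnWith {d : ℕ} (hd : 1 ≤ d) {p s : ℝ}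
    (hp : 0 < p) (hs : s < 1) :
    ∃ C > 0, ∀ T : Set (EuclideanSpace ℝ (Fin d)), MeasurableSet T → Bornology.IsBounded T →
      0 < Metric.diam T → ∀ (v : EuclideanSpace ℝ (Fin d) → ℝ) (K : ℝ≥0),
        LipschitzOnWith K v T →
          gagliardoSeminorm d s p T v ≤ C * K * Metric.diam T ^ ((d : ℝ) / p + 1 - s) := by
  have : Nontrivial (EuclideanSpace ℝ (Fin d)) :=
    Module.nontrivial_of_finrank_pos (R := ℝ) (by rwa [finrank_euclideanSpace_fin])
  set A := (∫ z in Metric.closedBall (0 : EuclideanSpace ℝ (Fin d)) 1,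
    ‖z‖ ^ (p - (d + s * p))) * volume.real (Metric.ball (0 : EuclideanSpace ℝ (Fin d)) 1)
  have hA : 0 ≤ A := mul_nonneg (integral_nonneg fun z => by positivity) measureReal_nonneg
  refine ⟨A ^ (1 / p) + 1, by positivity, fun T hmeas hT hdiam v K hv => ?_⟩
  have hdouble := integral_integral_rpow_div_le_of_lipschitzOnWith volume hp
    (c := d + s * p) (by rw [finrank_euclideanSpace_fin]; nlinarith) hmeas hT hdiam hv
  rw [finrank_euclideanSpace_fin] at hdouble
  have hexp : (p - (d + s * p) + 2 * d) * (1 / p) = (d : ℝ) / p + 1 - s := by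
    field_simp
    ring
  calc gagliardoSeminorm d s p T v
      ≤ (A * ((K : ℝ) ^ p * Metric.diam T ^ (p - (d + s * p) + 2 * d))) ^ (1 / p) :=
        Real.rpow_le_rpow (integral_nonneg fun x => integral_nonneg fun y => by positivity)
          hdouble (by positivity)
    _ = A ^ (1 / p) * (K * Metric.diam T ^ ((d : ℝ) / p + 1 - s)) := by
        rw [Real.mul_rpow hA (by positivity),
          Real.mul_rpow (x := (K : ℝ) ^ p) (by positivity) (by positivity),
          ← Real.rpow_mul K.coe_nonneg, ← Real.rpow_mul hdiam.le, mul_one_div_cancel hp.ne',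
          Real.rpow_one, hexp]
    _ ≤ (A ^ (1 / p) + 1) * K * Metric.diam T ^ ((d : ℝ) / p + 1 - s) := by
        rw [mul_assoc]
        gcongr
        linarith

end Gagliardo

theorem lagrange_basis_seminorm_bound_general {d r : ℕ} (hd : 1 ≤ d) (hr : 1 ≤ r) {p s : ℝ}
    (hp : 0 < p) (hs : s < 1) :
    ∃ C > 0, ∀ x : Fin (d + 1) → EuclideanSpace ℝ (Fin d), AffineIndependent ℝ x →
      ∀ P : MvPolynomial (Fin d) ℝ, P.totalDegree ≤ r → ∀ M : ℝ,
        (∀ y ∈ lagrangePoints d r x, |MvPolynomial.eval (fun i => y i) P| ≤ M) →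
        gagliardoSeminorm d s p (convexHull ℝ (Set.range x))
            (fun w => MvPolynomial.eval (fun i => w i) P) ≤
          C * shapeMeasure (convexHull ℝ (Set.range x)) * M *
            Metric.diam (convexHull ℝ (Set.range x)) ^ ((d : ℝ) / p - s) := by
  have : Nontrivial (Fin (d + 1)) := Fin.nontrivial_iff_two_le.2 (by omega)
  obtain ⟨C, hC, hseminorm⟩ := exists_gagliardoSeminorm_le_of_lipschitzOnWith hd hp hs
  obtain ⟨L, hL⟩ := exists_lipschitzOnWith_eval_of_abs_le_lagrangePoints hd hr
  refine ⟨C * (L + 1), by positivity, fun x hx P hP M hM => ?_⟩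
  set T := convexHull ℝ (Set.range x)
  have hdiam : 0 < Metric.diam T := diam_convexHull_range_pos hx.injective
  have hshape : 0 ≤ shapeMeasure T := shapeMeasure_nonneg T
  lift M to ℝ≥0 using (abs_nonneg _).trans (hM _ (nonempty_lagrangePoints d r x).some_mem)
  calc gagliardoSeminorm d s p T (fun w => MvPolynomial.eval (fun i => w i) P)
      ≤ C * (L * M * (shapeMeasure T / Metric.diam T).toNNReal : ℝ≥0) *
          Metric.diam T ^ ((d : ℝ) / p + 1 - s) :=
        hseminorm T ((Set.finite_range x).isCompact_convexHull ℝ).measurableSet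
          (isBounded_convexHull_range x) hdiam _ _ (hL x hx P hP M hM)
    _ = C * L * shapeMeasure T * M * Metric.diam T ^ ((d : ℝ) / p - s) := by
        rw [add_sub_right_comm, Real.rpow_add_one hdiam.ne']
        push_cast
        rw [Real.coe_toNNReal _ (by positivity)]
        field_simp
    _ ≤ C * (L + 1) * shapeMeasure T * M * Metric.diam T ^ ((d : ℝ) / p - s) := by
        gcongr
        linarith

/-- **Scaling of the Lagrange basis polynomials in Sobolev–Slobodeckij seminorms.**
For `d ≥ 1`, `r ≥ 1`, `p ∈ [1,∞)`, `s ∈ (0,1)` and `μ₀ > 0` there is `C > 0`,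
depending only on `d, r, s, p, μ₀`, such that for every `d`-simplex
`T = conv{x₀,…,x_d} ⊆ ℝ^d` with shape measure `h_T^d / vol(T) ≤ μ₀` and every
Lagrange point `z ∈ 𝔏_r(T)`, the Lagrange basis polynomial `Φ^T_{r,z}`
(the polynomial of degree ≤ r equal to `1` at `z` and `0` at the other Lagrange
points) satisfies `|Φ^T_{r,z}|_{W^{s,p}(T)} ≤ C · h_T^{d/p − s}`. -/
theorem lagrange_basis_seminorm_bound
    (d r : ℕ) (hd : 1 ≤ d) (hr : 1 ≤ r)
    (p s μ₀ : ℝ) (hp : 1 ≤ p) (hs0 : 0 < s) (hs1 : s < 1) (hμ₀ : 0 < μ₀) :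
    ∃ C > 0,
      ∀ x : Fin (d + 1) → EuclideanSpace ℝ (Fin d),
        AffineIndependent ℝ x →
        Metric.diam (convexHull ℝ (Set.range x)) ^ d /
            (volume (convexHull ℝ (Set.range x))).toReal ≤ μ₀ →
        ∀ z ∈ lagrangePoints d r x,
          ∀ P : MvPolynomial (Fin d) ℝ, P.totalDegree ≤ r →
            (∀ y ∈ lagrangePoints d r x,
              MvPolynomial.eval (fun i => y i) P = if y = z then 1 else 0) →
            gagliardoSeminorm d s p (convexHull ℝ (Set.range x))
                (fun w => MvPolynomial.eval (fun i => w i) P) ≤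
              C * Metric.diam (convexHull ℝ (Set.range x)) ^ ((d : ℝ) / p - s) := by
  obtain ⟨C, hC, hbound⟩ := lagrange_basis_seminorm_bound_general hd hr
    (zero_lt_one.trans_le hp) hs1
  refine ⟨C * μ₀, by positivity, fun x hx hμ z _ P hP hPz =>
    (hbound x hx P hP 1 fun y hy => by rw [hPz y hy]; split_ifs <;> simp).trans ?_⟩
  rw [mul_one, shapeMeasure, finrank_euclideanSpace_fin]
  gcongr
  exact hμ
end

section
/- Let d ≥ 1, r ∈ ℕ, p ∈ (1,∞), and μ₀ > 0, and let p' satisfy 1/p + 1/p' = 1. Then there exists a constant C > 0, depending only on d, r, p and μ₀, such that for every d-dimensional simplex T ⊆ ℝ^d with shape measure μ(T) ≤ μ₀ and every Lagrange point x ∈ 𝔏_r(T), the dual basis polynomial Ψ^T_{r,x}, defined as the unique polynomial of total degree ≤ r satisfying ∫_T Ψ^T_{r,x}(y) q(y) dy = q(x) for all polynomials q of total degree ≤ r, satisfies ( ∫_T |Ψ^T_{r,x}|^{p'} dy )^{1/p'} ≤ C · h_T^{−d/p}, where h_T is the diameter of T. -/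
/-!
Let `M` be a constant such that `q(y)² ≤ M ⨍_T q²` for all polynomials `q` of degree at most `r`
and all `y ∈ T`. On a fixed body such an `M` exists because any two norms on a finite-dimensional
space are equivalent, and the same `M` serves for all its affine images: composition with an affine
map preserves both the degree bound and averages. In particular it serves for all simplices.

Testing the defining property of `Ψ` with `q = Ψ` gives `∫_T Ψ² = Ψ(z) ≤ sup_T |Ψ|` because
`z ∈ T`, so the inverse estimate becomes `sup_T |Ψ| ≤ M / vol(T)`. Hence
`‖Ψ‖_{L^{p'}(T)} ≤ (M / vol(T)) vol(T)^{1/p'} = M vol(T)^{-1/p}`, and `h_T^d ≤ μ₀ vol(T)`.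
-/

open MeasureTheory

theorem exists_pos_norm_le_mul_norm_of_injective {𝕜 W E F : Type*}
    [NontriviallyNormedField 𝕜] [CompleteSpace 𝕜] [AddCommGroup W] [Module 𝕜 W]
    [FiniteDimensional 𝕜 W] [NormedAddCommGroup E] [NormedSpace 𝕜 E] [SeminormedAddCommGroup F]
    [NormedSpace 𝕜 F] (f : W →ₗ[𝕜] E) (hf : Function.Injective f) (g : W →ₗ[𝕜] F) :
    ∃ C > 0, ∀ w, ‖g w‖ ≤ C * ‖f w‖ := by
  let e := LinearEquiv.ofInjective f hf
  have : FiniteDimensional 𝕜 (LinearMap.range f) := e.finiteDimensional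
  obtain ⟨C, hC, hle⟩ := (LinearMap.toContinuousLinearMap (g ∘ₗ e.symm.toLinearMap)).bound
  exact ⟨C, hC, fun w => by simpa [e] using hle (e w)⟩

theorem abs_le_of_sq_le_mul_apply {α : Type*} {s : Set α} {f : α → ℝ} {c : ℝ} (hc : 0 ≤ c)
    {z : α} (hz : z ∈ s) (h : ∀ y ∈ s, f y ^ 2 ≤ c * f z) : ∀ y ∈ s, |f y| ≤ c := by
  have hfz : f z ≤ c := by
    by_contra! hlt
    nlinarith [h z hz]
  intro y hy
  refine abs_le_of_sq_le_sq ?_ hc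
  calc f y ^ 2 ≤ c * f z := h y hy
    _ ≤ c * c := by gcongr
    _ = c ^ 2 := (sq c).symm

section Measure

theorem measureReal_pos_of_isCompact {X : Type*} [TopologicalSpace X] [MeasurableSpace X]
    {μ : Measure X} [IsFiniteMeasureOnCompacts μ] [μ.IsOpenPosMeasure] {K : Set X}
    (hK : IsCompact K) (hKint : (interior K).Nonempty) : 0 < μ.real K :=
  ENNReal.toReal_pos (Measure.measure_pos_of_nonempty_interior μ hKint).ne' hK.measure_lt_top.ne

section AffineImage

variable {E G : Type*} [NormedAddCommGroup E] [NormedSpace ℝ E] [FiniteDimensional ℝ E]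
  [MeasurableSpace E] [BorelSpace E] [NormedAddCommGroup G] [NormedSpace ℝ G]
  (μ : Measure E) [μ.IsAddHaarMeasure] (F : E ≃ᵃ[ℝ] E) {s : Set E}

theorem setIntegral_image_affineEquiv (hs : MeasurableSet s) (f : E → G) :
    ∫ y in F '' s, f y ∂μ = |LinearMap.det F.linear.toLinearMap| • ∫ y in s, f (F y) ∂μ := by
  have hderiv (y : E) : HasFDerivAt F (LinearMap.toContinuousLinearMap F.linear.toLinearMap) y :=
    (AffineEquiv.toContinuousAffineEquiv F).toContinuousAffineMap.hasFDerivAt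
  rw [integral_image_eq_integral_abs_det_fderiv_smul μ hs
    (fun y _ => (hderiv y).hasFDerivWithinAt) F.injective.injOn, integral_smul,
    LinearMap.det_toContinuousLinearMap]

theorem setAverage_image_affineEquiv (hs : MeasurableSet s) (f : E → G) :
    ⨍ y in F '' s, f y ∂μ = ⨍ y in s, f (F y) ∂μ := by
  have hdet : |LinearMap.det F.linear.toLinearMap| ≠ 0 :=
    abs_ne_zero.2 (LinearEquiv.isUnit_det' F.linear).ne_zero
  have hvol : μ.real (F '' s) = |LinearMap.det F.linear.toLinearMap| * μ.real s := by
    simpa using setIntegral_image_affineEquiv μ F hs fun _ => (1 : ℝ)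
  rw [setAverage_eq, setAverage_eq, setIntegral_image_affineEquiv μ F hs, hvol, smul_smul,
    mul_inv_rev, inv_mul_cancel_right₀ hdet]

end AffineImage

theorem rpow_setIntegral_abs_rpow_le {α : Type*} [MeasurableSpace α] {μ : Measure α} {s : Set α}
    (hs : μ s < ⊤) {f : α → ℝ} {B q : ℝ} (hB : 0 ≤ B) (hq : 0 < q) (hf : ∀ y ∈ s, |f y| ≤ B) :
    (∫ y in s, |f y| ^ q ∂μ) ^ (1 / q) ≤ B * μ.real s ^ (1 / q) := by
  have hint : ∫ y in s, |f y| ^ q ∂μ ≤ B ^ q * μ.real s := by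
    refine (Real.le_norm_self _).trans (norm_setIntegral_le_of_norm_le_const hs fun y hy => ?_)
    rw [Real.norm_of_nonneg (by positivity)]
    exact Real.rpow_le_rpow (abs_nonneg _) (hf y hy) hq.le
  calc (∫ y in s, |f y| ^ q ∂μ) ^ (1 / q) ≤ (B ^ q * μ.real s) ^ (1 / q) :=
        Real.rpow_le_rpow (integral_nonneg fun _ => by positivity) hint (by positivity)
    _ = B * μ.real s ^ (1 / q) := by
        rw [Real.mul_rpow (by positivity) (by positivity), ← Real.rpow_mul hB,
          mul_one_div_cancel hq.ne', Real.rpow_one]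

end Measure

section Polynomial

open MvPolynomial

theorem totalDegree_bind₁_le {σ τ R : Type*} [CommSemiring R] {f : σ → MvPolynomial τ R} {n : ℕ}
    (hf : ∀ i, (f i).totalDegree ≤ n) (q : MvPolynomial σ R) :
    (bind₁ f q).totalDegree ≤ q.totalDegree * n := by
  conv_lhs => rw [q.as_sum, map_sum]
  refine totalDegree_finsetSum_le fun m hm => ?_
  rw [bind₁_monomial]
  calc (C (q.coeff m) * ∏ i ∈ m.support, f i ^ m i).totalDegree
      ≤ (C (q.coeff m)).totalDegree + (∏ i ∈ m.support, f i ^ m i).totalDegree :=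
        totalDegree_mul _ _
    _ ≤ ∑ i ∈ m.support, (f i ^ m i).totalDegree := by
        rw [totalDegree_C, zero_add]
        exact totalDegree_finsetProd _ _
    _ ≤ ∑ i ∈ m.support, m i * n :=
        Finset.sum_le_sum fun i _ => (totalDegree_pow _ _).trans (Nat.mul_le_mul_left _ (hf i))
    _ = (m.sum fun _ e => e) * n := (Finset.sum_mul _ _ _).symm
    _ ≤ q.totalDegree * n := Nat.mul_le_mul_right n (le_totalDegree hm)

theorem eq_zero_of_eval_eq_zero_of_isOpen {ι R : Type*} [Finite ι] [NontriviallyNormedField R]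
    {U : Set (ι → R)} (hU : IsOpen U) (hne : U.Nonempty) {q : MvPolynomial ι R}
    (hq : ∀ v ∈ U, eval v q = 0) : q = 0 := by
  obtain ⟨v, hv⟩ := hne
  obtain ⟨u, hu, huU⟩ := isOpen_pi_iff'.1 hU v hv
  have hinf (i : ι) : (u i).Infinite := infinite_of_mem_nhds (v i) ((hu i).1.mem_nhds (hu i).2)
  exact funext_set u hinf fun w hw => by rw [hq w (huU hw), map_zero]

variable {ι κ : Type*}

/-- The pullback `q ↦ q ∘ F` of polynomials in the standard coordinates along an affine map `F`,
which carries estimates for polynomials from a set to its affine images. -/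
noncomputable def affinePullback [Fintype ι] (F : EuclideanSpace ℝ ι →ᵃ[ℝ] EuclideanSpace ℝ κ) :
    MvPolynomial κ ℝ →ₐ[ℝ] MvPolynomial ι ℝ := by
  classical
  exact bind₁ fun k => C (F 0 k) + ∑ i, C (F.linear (EuclideanSpace.single i 1) k) * X i

theorem totalDegree_affinePullback_le [Fintype ι] (F : EuclideanSpace ℝ ι →ᵃ[ℝ] EuclideanSpace ℝ κ)
    (q : MvPolynomial κ ℝ) : (affinePullback F q).totalDegree ≤ q.totalDegree := by
  refine (totalDegree_bind₁_le (n := 1) (fun k => ?_) q).trans_eq (mul_one _)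
  refine (totalDegree_add _ _).trans (max_le (by simp) ?_)
  exact totalDegree_finsetSum_le fun i _ => (totalDegree_mul _ _).trans (by simp)

theorem eval_affinePullback [Fintype ι] (F : EuclideanSpace ℝ ι →ᵃ[ℝ] EuclideanSpace ℝ κ)
    (q : MvPolynomial κ ℝ) (y : EuclideanSpace ℝ ι) :
    eval (fun i => y i) (affinePullback F q) = eval (fun k => F y k) q := by
  classical
  have hy : y = ∑ i, y i • EuclideanSpace.single i (1 : ℝ) := by
    simpa using ((EuclideanSpace.basisFun ι ℝ).sum_repr y).symm
  have hF : F y = ∑ i, y i • F.linear (EuclideanSpace.single i 1) + F 0 := by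
    conv_lhs => rw [hy, F.decomp]
    simp
  rw [affinePullback, ← coe_aeval_eq_eval, RingHom.coe_coe, aeval_bind₁,
    ← coe_aeval_eq_eval, RingHom.coe_coe]
  congr 2
  funext k
  simp [hF, add_comm, mul_comm]

/-- The restriction of polynomials in the standard coordinates to `K`, as an algebra map into
`C(K, ℝ)`; the supremum and `L²(K)` norms of polynomials are taken through it. -/
noncomputable def restrictPolynomial (K : Set (EuclideanSpace ℝ ι)) :
    MvPolynomial ι ℝ →ₐ[ℝ] C(K, ℝ) :=
  aeval fun i => ⟨fun y => y.1 i, by fun_prop⟩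

theorem restrictPolynomial_apply {K : Set (EuclideanSpace ℝ ι)} (q : MvPolynomial ι ℝ) (y : K) :
    restrictPolynomial K q y = eval (fun i => y.1 i) q := by
  induction q using MvPolynomial.induction_on with
  | C a => simp [restrictPolynomial]
  | add p q hp hq => simp [hp, hq]
  | mul_X p i hp => rw [map_mul, ContinuousMap.mul_apply, hp, map_mul]; simp [restrictPolynomial]

theorem eq_zero_of_setIntegral_sq_eval_eq_zero [Finite ι]
    {μ : Measure (EuclideanSpace ℝ ι)} [IsFiniteMeasureOnCompacts μ] [μ.IsOpenPosMeasure]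
    {K : Set (EuclideanSpace ℝ ι)} (hK : IsCompact K) (hKint : (interior K).Nonempty)
    {q : MvPolynomial ι ℝ} (h : ∫ y in K, eval (fun i => y i) q ^ 2 ∂μ = 0) : q = 0 := by
  have hcont : Continuous fun y : EuclideanSpace ℝ ι => eval (fun i => y i) q ^ 2 := by
    have := continuous_eval q
    fun_prop
  rw [setIntegral_eq_zero_iff_of_nonneg_ae (.of_forall fun _ => sq_nonneg _)
    (hcont.continuousOn.integrableOn_compact hK)] at h
  have hzero := Measure.eqOn_open_of_ae_eq (ae_restrict_of_ae_restrict_of_subset interior_subset h)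
    isOpen_interior hcont.continuousOn continuousOn_const
  refine eq_zero_of_eval_eq_zero_of_isOpen
    (isOpen_interior.preimage (PiLp.continuous_toLp 2 fun _ : ι => ℝ))
    (hKint.preimage (WithLp.toLp_surjective 2)) fun v hv => ?_
  exact pow_eq_zero_iff two_ne_zero |>.1 (hzero hv)

theorem exists_sq_eval_le_mul_setAverage_sq_eval [Finite ι] (r : ℕ)
    {μ : Measure (EuclideanSpace ℝ ι)} [IsFiniteMeasureOnCompacts μ] [μ.IsOpenPosMeasure]
    {K : Set (EuclideanSpace ℝ ι)} (hK : IsCompact K) (hKint : (interior K).Nonempty) :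
    ∃ M > 0, ∀ q : MvPolynomial ι ℝ, q.totalDegree ≤ r → ∀ y ∈ K,
      eval (fun i => y i) q ^ 2 ≤ M * ⨍ y in K, eval (fun i => y i) q ^ 2 ∂μ := by
  have : CompactSpace K := isCompact_iff_compactSpace.1 hK
  let ν : Measure K := μ.comap (↑)
  have : IsFiniteMeasureOnCompacts ν := .comap' μ continuous_subtype_val
    (.subtype_coe hK.measurableSet)
  let g := (restrictPolynomial K).toLinearMap ∘ₗ (restrictTotalDegree ι ℝ r).subtype
  let f := (ContinuousMap.toLp 2 ν ℝ).toLinearMap ∘ₗ g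
  have hf_sq (q) : ‖f q‖ ^ 2 = ∫ y in K, eval (fun i => y i) q.1 ^ 2 ∂μ := by
    rw [← real_inner_self_eq_norm_sq]
    calc inner ℝ (f q) (f q) = ∫ y : K, eval (fun i => y.1 i) q.1 ^ 2 ∂ν := by
          refine (ContinuousMap.inner_toLp ν (g q) (g q)).trans ?_
          simp [g, restrictPolynomial_apply, sq]
      _ = ∫ y in K, eval (fun i => y i) q.1 ^ 2 ∂μ :=
          integral_subtype_comap hK.measurableSet fun y => eval (fun i => y i) q.1 ^ 2
  have hf : Function.Injective f := by
    refine (injective_iff_map_eq_zero f).2 fun q hq => Subtype.ext ?_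
    refine eq_zero_of_setIntegral_sq_eval_eq_zero hK hKint (μ := μ) ?_
    rw [← hf_sq, hq, norm_zero, zero_pow two_ne_zero]
  obtain ⟨C, hC, hle⟩ := exists_pos_norm_le_mul_norm_of_injective f hf g
  have hV := measureReal_pos_of_isCompact (μ := μ) hK hKint
  refine ⟨C ^ 2 * μ.real K, by positivity, fun q hq y hy => ?_⟩
  let w : restrictTotalDegree ι ℝ r := ⟨q, (mem_restrictTotalDegree _ _ _).2 hq⟩
  calc eval (fun i => y i) q ^ 2 = ‖g w ⟨y, hy⟩‖ ^ 2 := by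
        simp [g, w, restrictPolynomial_apply]
    _ ≤ (C * ‖f w‖) ^ 2 := by
        gcongr
        exact ((g w).norm_coe_le_norm _).trans (hle w)
    _ = C ^ 2 * ∫ y in K, eval (fun i => y i) q ^ 2 ∂μ := by rw [mul_pow, hf_sq]
    _ = C ^ 2 * μ.real K * ⨍ y in K, eval (fun i => y i) q ^ 2 ∂μ := by
        rw [setAverage_eq, smul_eq_mul]
        field_simp

theorem exists_sq_eval_le_mul_setAverage_sq_eval_image [Fintype ι] (r : ℕ)
    (μ : Measure (EuclideanSpace ℝ ι)) [μ.IsAddHaarMeasure]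
    {K : Set (EuclideanSpace ℝ ι)} (hK : IsCompact K) (hKint : (interior K).Nonempty) :
    ∃ M > 0, ∀ F : EuclideanSpace ℝ ι ≃ᵃ[ℝ] EuclideanSpace ℝ ι, ∀ q : MvPolynomial ι ℝ,
      q.totalDegree ≤ r → ∀ y ∈ F '' K,
        eval (fun i => y i) q ^ 2 ≤ M * ⨍ y in F '' K, eval (fun i => y i) q ^ 2 ∂μ := by
  obtain ⟨M, hM, hle⟩ := exists_sq_eval_le_mul_setAverage_sq_eval r hK hKint (μ := μ)
  refine ⟨M, hM, fun F q hq => Set.forall_mem_image.2 fun w hw => ?_⟩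
  rw [setAverage_image_affineEquiv μ F hK.measurableSet]
  have hdeg := (totalDegree_affinePullback_le F.toAffineMap q).trans hq
  simpa only [eval_affinePullback, AffineEquiv.coe_toAffineMap] using hle _ hdeg w hw

end Polynomial

theorem diam_pow_finrank_pos {E : Type*} [NormedAddCommGroup E] [NormedSpace ℝ E]
    {s : Set E} (hs : Bornology.IsBounded s) (hint : (interior s).Nonempty) :
    0 < Metric.diam s ^ Module.finrank ℝ E := by
  cases subsingleton_or_nontrivial E with
  | inl _ => simp [Module.finrank_zero_of_subsingleton]
  | inr _ =>
    obtain ⟨y, hy⟩ := hint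
    have := Module.punctured_nhds_neBot ℝ E y
    have hs' : s.Nontrivial := (infinite_of_mem_nhds y (mem_interior_iff_mem_nhds.1 hy)).nontrivial
    exact pow_pos (Metric.diam_pos hs' hs) _

theorem rpow_neg_le_of_pow_div_le {V h μ₀ p : ℝ} {n : ℕ} (hV : 0 < V) (hh : 0 ≤ h)
    (hpos : 0 < h ^ n) (hp : 0 < p) (hle : h ^ n / V ≤ μ₀) :
    V ^ (-(1 / p)) ≤ μ₀ ^ (1 / p) * h ^ (-(n : ℝ) / p) := by
  have hμ₀ : 0 < μ₀ := (div_pos hpos hV).trans_le hle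
  have hVh : h ^ n / μ₀ ≤ V := (div_le_comm₀ hV hμ₀).1 hle
  calc V ^ (-(1 / p)) ≤ (h ^ n / μ₀) ^ (-(1 / p)) :=
        Real.rpow_le_rpow_of_nonpos (by positivity) hVh (by simpa using hp.le)
    _ = μ₀ ^ (1 / p) * (h ^ n) ^ (-(1 / p)) := by
        rw [Real.div_rpow hpos.le hμ₀.le, Real.rpow_neg hμ₀.le, div_inv_eq_mul, mul_comm]
    _ = μ₀ ^ (1 / p) * h ^ (-(n : ℝ) / p) := by
        rw [← Real.rpow_natCast, ← Real.rpow_mul hh]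
        ring_nf

theorem exists_affineEquiv_comp_eq {ι k V V' P P' : Type*} [Ring k] [AddCommGroup V] [Module k V]
    [AddTorsor V P] [AddCommGroup V'] [Module k V'] [AddTorsor V' P'] (b : AffineBasis ι k P)
    (b' : AffineBasis ι k P') : ∃ F : P ≃ᵃ[k] P', F ∘ b = b' := by
  obtain ⟨i⟩ := b.nonempty
  let L := (b.basisOf i).equiv (b'.basisOf i) (Equiv.refl _)
  refine ⟨(AffineEquiv.vaddConst k (b i)).symm.trans
    (L.toAffineEquiv.trans (AffineEquiv.vaddConst k (b' i))), funext fun j => ?_⟩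
  rcases eq_or_ne j i with rfl | hj
  · simp
  · have hL : L (b j -ᵥ b i) = b' j -ᵥ b' i := by
      simpa [L] using (b.basisOf i).equiv_apply ⟨j, hj⟩ (b'.basisOf i) (Equiv.refl _)
    simp [hL]

theorem exists_affineEquiv_image_convexHull_eq {ι E : Type*} [Finite ι] [AddCommGroup E]
    [Module ℝ E] (b : AffineBasis ι ℝ E) {x : ι → E}
    (hx : AffineIndependent ℝ x) :
    ∃ F : E ≃ᵃ[ℝ] E, F '' convexHull ℝ (Set.range b) = convexHull ℝ (Set.range x) := by
  have := Fintype.ofFinite ι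
  have := b.finiteDimensional
  have hspan : affineSpan ℝ (Set.range x) = ⊤ :=
    hx.affineSpan_eq_top_iff_card_eq_finrank_add_one.2 b.card_eq_finrank_add_one
  obtain ⟨F, hF⟩ := exists_affineEquiv_comp_eq b ⟨x, hx, hspan⟩
  refine ⟨F, ?_⟩
  rw [← F.coe_toAffineMap, AffineMap.image_convexHull, ← Set.range_comp, F.coe_toAffineMap, hF]
  rfl

theorem lagrangePoints_subset_convexHull {d r : ℕ} (hr : 1 ≤ r)
    (x : Fin (d + 1) → EuclideanSpace ℝ (Fin d)) :
    lagrangePoints d r x ⊆ convexHull ℝ (Set.range x) := by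
  rintro _ ⟨α, hα, rfl⟩
  have hr0 : (r : ℝ) ≠ 0 := by positivity
  simp only [Finset.smul_sum, smul_smul]
  refine (convex_convexHull ℝ _).sum_mem (fun i _ => by positivity) ?_
    fun i _ => subset_convexHull ℝ _ (Set.mem_range_self i)
  rw [← Finset.mul_sum, ← Nat.cast_sum, hα, inv_mul_cancel₀ hr0]

theorem dual_basis_polynomial_bound_general {ι : Type*} [Fintype ι] (r : ℕ) {p p' μ₀ : ℝ}
    (hpp' : p.HolderConjugate p') (hμ₀ : 0 < μ₀) {K : Set (EuclideanSpace ℝ ι)}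
    (hK : IsCompact K) (hKint : (interior K).Nonempty) :
    ∃ C > 0, ∀ F : EuclideanSpace ℝ ι ≃ᵃ[ℝ] EuclideanSpace ℝ ι,
      Metric.diam (F '' K) ^ Fintype.card ι / volume.real (F '' K) ≤ μ₀ →
      ∀ z ∈ F '' K, ∀ Ψ : MvPolynomial ι ℝ, Ψ.totalDegree ≤ r →
        (∀ q : MvPolynomial ι ℝ, q.totalDegree ≤ r →
          ∫ y in F '' K, MvPolynomial.eval (fun i => y i) Ψ * MvPolynomial.eval (fun i => y i) q =
            MvPolynomial.eval (fun i => z i) q) →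
        (∫ y in F '' K, |MvPolynomial.eval (fun i => y i) Ψ| ^ p') ^ (1 / p') ≤
          C * Metric.diam (F '' K) ^ (-(Fintype.card ι : ℝ) / p) := by
  obtain ⟨M, hM, hinv⟩ := exists_sq_eval_le_mul_setAverage_sq_eval_image r volume hK hKint
  refine ⟨M * μ₀ ^ (1 / p), by positivity, fun F hμ z hz Ψ hΨ hrep => ?_⟩
  have hT : IsCompact (F '' K) := hK.image F.continuous_of_finiteDimensional
  have hTint : (interior (F '' K)).Nonempty := by
    rw [← F.coe_toHomeomorphOfFiniteDimensional, ← Homeomorph.image_interior]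
    exact hKint.image _
  have hsq := hinv F Ψ hΨ
  set T := F '' K
  have hV : 0 < volume.real T := measureReal_pos_of_isCompact hT hTint
  have hsup : ∀ y ∈ T, |MvPolynomial.eval (fun i => y i) Ψ| ≤ M / volume.real T := by
    refine abs_le_of_sq_le_mul_apply (by positivity) hz fun y hy => (hsq y hy).trans_eq ?_
    rw [← hrep Ψ hΨ, setAverage_eq, smul_eq_mul, div_eq_mul_inv, mul_assoc]
    simp only [sq]
  have hdiam : 0 < Metric.diam T ^ Fintype.card ι := by
    simpa using diam_pow_finrank_pos hT.isBounded hTint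
  calc (∫ y in T, |MvPolynomial.eval (fun i => y i) Ψ| ^ p') ^ (1 / p')
      ≤ M / volume.real T * volume.real T ^ (1 / p') :=
        rpow_setIntegral_abs_rpow_le hT.measure_lt_top (by positivity) hpp'.symm.pos hsup
    _ = M * volume.real T ^ (-(1 / p)) := by
        have hexp : -(1 / p) = 1 / p' - 1 := by
          simp only [one_div]
          linarith [hpp'.inv_add_inv_eq_one]
        rw [hexp, Real.rpow_sub_one hV.ne', div_mul_eq_mul_div, mul_div_assoc]
    _ ≤ M * (μ₀ ^ (1 / p) * Metric.diam T ^ (-(Fintype.card ι : ℝ) / p)) := by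
        gcongr
        exact rpow_neg_le_of_pow_div_le hV Metric.diam_nonneg hdiam hpp'.pos hμ
    _ = M * μ₀ ^ (1 / p) * Metric.diam T ^ (-(Fintype.card ι : ℝ) / p) := (mul_assoc _ _ _).symm

/-- **Scaling of the dual basis polynomials in the dual Lebesgue norm.**
For `d ≥ 1`, `r ≥ 1`, `p ∈ (1,∞)`, `μ₀ > 0` and `p'` the conjugate exponent
(`1/p + 1/p' = 1`), there is `C > 0`, depending only on `d, r, p, μ₀`, such that
for every `d`-simplex `T = conv{x₀,…,x_d} ⊆ ℝ^d` with shape measure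
`h_T^d / vol(T) ≤ μ₀`, every Lagrange point `z ∈ 𝔏_r(T)`, and every polynomial
`Ψ` of total degree ≤ r satisfying `∫_T Ψ q = q(z)` for all polynomials `q` of
total degree ≤ r, one has `( ∫_T |Ψ|^{p'} )^{1/p'} ≤ C · h_T^{−d/p}`. -/
theorem dual_basis_polynomial_bound
    (d r : ℕ) (hd : 1 ≤ d) (hr : 1 ≤ r)
    (p p' μ₀ : ℝ) (hp : 1 < p) (hμ₀ : 0 < μ₀)
    (hconj : 1 / p + 1 / p' = 1) :
    ∃ C > 0,
      ∀ x : Fin (d + 1) → EuclideanSpace ℝ (Fin d),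
        AffineIndependent ℝ x →
        Metric.diam (convexHull ℝ (Set.range x)) ^ d /
            (volume (convexHull ℝ (Set.range x))).toReal ≤ μ₀ →
        ∀ z ∈ lagrangePoints d r x,
          ∀ Ψ : MvPolynomial (Fin d) ℝ, Ψ.totalDegree ≤ r →
            (∀ q : MvPolynomial (Fin d) ℝ, q.totalDegree ≤ r →
              ∫ y in convexHull ℝ (Set.range x),
                  MvPolynomial.eval (fun i => y i) Ψ * MvPolynomial.eval (fun i => y i) q =
                MvPolynomial.eval (fun i => z i) q) →
            (∫ y in convexHull ℝ (Set.range x),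
                |MvPolynomial.eval (fun i => y i) Ψ| ^ p') ^ (1 / p') ≤
              C * Metric.diam (convexHull ℝ (Set.range x)) ^ (-(d : ℝ) / p) := by
  obtain ⟨b⟩ : Nonempty (AffineBasis (Fin (d + 1)) ℝ (EuclideanSpace ℝ (Fin d))) :=
    AffineBasis.exists_affineBasis_of_finiteDimensional (by simp)
  obtain ⟨C, hC, hbound⟩ := dual_basis_polynomial_bound_general r
    (Real.holderConjugate_iff.2 ⟨hp, by simpa using hconj⟩) hμ₀
    ((Set.finite_range b).isCompact_convexHull ℝ) ⟨_, b.centroid_mem_interior_convexHull⟩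
  refine ⟨C, hC, fun x hx hμ z hz => ?_⟩
  obtain ⟨F, hF⟩ := exists_affineEquiv_image_convexHull_eq b hx
  rw [← hF] at hμ ⊢
  simpa only [Fintype.card_fin] using
    hbound F (by simpa [Measure.real] using hμ) z (hF ▸ lagrangePoints_subset_convexHull hr x hz)
end
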